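/- Let m ≥ 1 be an integer and let μ be a positive Borel measure on T_{Λ₃}. Then the following are equivalent: (1) there exists A > 0 such that ∫_{T_{Λ₃}} |□^m F|² dμ ≤ A ‖F‖²_{H²(T_{Λ₃})} for every F ∈ H²(T_{Λ₃}); (2) there exists C > 0 such that ∫_{T_{Λ₃}} |G|² dμ ≤ C ‖G‖²_{A²_{2m}(T_{Λ₃})} for every G ∈ A²_{2m}(T_{Λ₃}). -/

import Mathlib

open MeasureTheory Set
open scoped ENNReal NNReal

noncomputable section

/-- The Lorentz cone `Λ₃ = {y ∈ ℝ³ : y₁ + y₂ > 0, y₁² − y₂² − y₃² > 0}`. -/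
def Lambda3 : Set (Fin 3 → ℝ) :=
  {y | 0 < y 0 + y 1 ∧ 0 < (y 0) ^ 2 - (y 1) ^ 2 - (y 2) ^ 2}

/-- The tube domain `T_{Λ₃} = ℝ³ + iΛ₃ ⊂ ℂ³`. -/
def TLambda3 : Set (Fin 3 → ℂ) :=
  {z | (fun i => (z i).im) ∈ Lambda3}

/-- The determinant function of the Lorentz cone: `Δ(y) = y₁² − y₂² − y₃²`. -/
def DeltaL (y : Fin 3 → ℝ) : ℝ := (y 0) ^ 2 - (y 1) ^ 2 - (y 2) ^ 2

/-- Square of the Hardy space `H²(T_{Λ₃})` norm. -/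
def hardyNormSq (F : (Fin 3 → ℂ) → ℂ) : ℝ≥0∞ :=
  ⨆ y ∈ Lambda3,
    ∫⁻ x : Fin 3 → ℝ, (‖F (fun i => (x i : ℂ) + (y i : ℂ) * Complex.I)‖₊ : ℝ≥0∞) ^ 2

/-- Square of the weighted Bergman space `A²_ν(T_{Λ₃})` norm:
`‖G‖² = ∫_{Λ₃} ∫_{ℝ³} |G(x+iy)|² Δ(y)^{ν−3/2} dx dy`. -/
def bergNormSqTube (ν : ℝ) (G : (Fin 3 → ℂ) → ℂ) : ℝ≥0∞ :=
  ∫⁻ y in Lambda3,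
    (∫⁻ x : Fin 3 → ℝ, (‖G (fun i => (x i : ℂ) + (y i : ℂ) * Complex.I)‖₊ : ℝ≥0∞) ^ 2)
      * ENNReal.ofReal (DeltaL y ^ (ν - 3 / 2))

/-- Partial derivative in the `i`-th complex coordinate. -/
def pd (i : Fin 3) (F : (Fin 3 → ℂ) → ℂ) : (Fin 3 → ℂ) → ℂ :=
  fun z => fderiv ℂ F z (Pi.single i 1)

/-- The box operator `□ = −∂²/∂z₁² + ∂²/∂z₂² + ∂²/∂z₃²` associated to the Lorentz cone. -/
def Box (F : (Fin 3 → ℂ) → ℂ) : (Fin 3 → ℂ) → ℂ :=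
  fun z => - pd 0 (pd 0 F) z + pd 1 (pd 1 F) z + pd 2 (pd 2 F) z


namespace BC
open Filter Topology

abbrev R3 := Fin 3 → ℝ
abbrev C3 := Fin 3 → ℂ

/-- real dot product -/
def dotR (x ξ : R3) : ℝ := x 0 * ξ 0 + x 1 * ξ 1 + x 2 * ξ 2

/-- complex-bilinear dot product -/
def dotC (z : C3) (ξ : R3) : ℂ := z 0 * ξ 0 + z 1 * ξ 1 + z 2 * ξ 2

/-- the point `x + i y` -/
def xy (x y : R3) : C3 := fun i => (x i : ℂ) + (y i : ℂ) * Complex.I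

/-- imaginary part -/
def imv (z : C3) : R3 := fun i => (z i).im

/-- real part -/
def rev (z : C3) : R3 := fun i => (z i).re

/-- base point of the cone -/
def e0 : R3 := ![1, 0, 0]

/-- the dual cone (closed) -/
def Cc : Set R3 := {ξ | ∀ y ∈ Lambda3, 0 ≤ dotR y ξ}

lemma mem_L {y : R3} : y ∈ Lambda3 ↔ 0 < y 0 ∧ (y 1) ^ 2 + (y 2) ^ 2 < (y 0) ^ 2 := by
  constructor
  · rintro ⟨h1, h2⟩
    have : 0 < y 0 := by nlinarith [sq_nonneg (y 2)]
    exact ⟨this, by linarith⟩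
  · rintro ⟨h1, h2⟩
    have := abs_lt_of_sq_lt_sq (a := y 1) (b := y 0) (by nlinarith [sq_nonneg (y 2)]) h1.le
    rw [abs_lt] at this
    exact ⟨by linarith, by linarith⟩

lemma delta_pos {y : R3} (h : y ∈ Lambda3) : 0 < DeltaL y := h.2

lemma lor_pos {y w : R3} (hy : y ∈ Lambda3) (hw : w ∈ Lambda3) :
    |y 1 * w 1 + y 2 * w 2| < y 0 * w 0 := by
  rw [mem_L] at hy hw
  apply abs_lt_of_sq_lt_sq _ (mul_pos hy.1 hw.1).le
  have h1 := sq_nonneg (y 1 * w 2 - y 2 * w 1)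
  have h2 : ((y 1) ^ 2 + (y 2) ^ 2) * ((w 1) ^ 2 + (w 2) ^ 2) < (y 0) ^ 2 * (w 0) ^ 2 := by
    have a1 : 0 < (y 0)^2 := by have := hy.1; positivity
    have a2 : 0 ≤ (w 1)^2 + (w 2)^2 := by positivity
    nlinarith [hy.2, hw.2]
  nlinarith

lemma dot_pos {y w : R3} (hy : y ∈ Lambda3) (hw : w ∈ Lambda3) : 0 < dotR y w := by
  have := (abs_lt.1 (lor_pos hy hw)).1
  unfold dotR; linarith

lemma L_sub_Cc : Lambda3 ⊆ Cc := fun _ hξ _ hy => (dot_pos hy hξ).le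

lemma delta_add {y w : R3} (hy : y ∈ Lambda3) (hw : w ∈ Lambda3) :
    DeltaL y + DeltaL w ≤ DeltaL (y + w) := by
  have := (abs_lt.1 (lor_pos hy hw)).2
  simp only [DeltaL, Pi.add_apply]; nlinarith

lemma add_L {y w : R3} (hy : y ∈ Lambda3) (hw : w ∈ Lambda3) : y + w ∈ Lambda3 := by
  have h := delta_add hy hw
  refine ⟨?_, ?_⟩
  · have := hy.1; have := hw.1; simp only [Pi.add_apply]; linarith
  · have := delta_pos hy; have := delta_pos hw
    show 0 < DeltaL (y + w)
    linarith

lemma smul_L {y : R3} {t : ℝ} (ht : 0 < t) (hy : y ∈ Lambda3) : t • y ∈ Lambda3 := by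
  rw [mem_L] at *
  simp only [Pi.smul_apply, smul_eq_mul]
  refine ⟨mul_pos ht hy.1, ?_⟩
  have := mul_pos ht ht
  nlinarith [hy.2]

lemma e0_L : e0 ∈ Lambda3 := by rw [mem_L]; simp [e0]

lemma isOpen_L : IsOpen Lambda3 := by
  have : Lambda3 = {y : R3 | 0 < y 0 + y 1} ∩ {y : R3 | 0 < (y 0) ^ 2 - (y 1) ^ 2 - (y 2) ^ 2} := rfl
  rw [this]
  exact (isOpen_lt (by fun_prop) (by fun_prop)).inter (isOpen_lt (by fun_prop) (by fun_prop))

lemma convex_L : Convex ℝ Lambda3 := by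
  intro x hx y hy a b ha hb hab
  rcases ha.eq_or_lt with rfl | ha
  · have : b = 1 := by linarith
    subst this; simpa using hy
  rcases hb.eq_or_lt with rfl | hb
  · have : a = 1 := by linarith
    subst this; simpa using hx
  exact add_L (smul_L ha hx) (smul_L hb hy)

lemma measurable_L : MeasurableSet Lambda3 := isOpen_L.measurableSet

lemma continuous_imv : Continuous imv := by unfold imv; fun_prop
lemma continuous_rev : Continuous rev := by unfold rev; fun_prop

lemma T_eq : TLambda3 = imv ⁻¹' Lambda3 := rfl

lemma isOpen_T : IsOpen TLambda3 := by rw [T_eq]; exact isOpen_L.preimage continuous_imv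

lemma convex_T : Convex ℝ TLambda3 := by
  intro x hx y hy a b ha hb hab
  have := convex_L (x := imv x) hx (y := imv y) hy ha hb hab
  rw [T_eq, mem_preimage]
  convert this using 1
  ext i; simp [imv]

lemma imv_xy (x y : R3) : imv (xy x y) = y := by ext i; simp [imv, xy]
lemma rev_xy (x y : R3) : rev (xy x y) = x := by ext i; simp [rev, xy]
lemma xy_rev_imv (z : C3) : xy (rev z) (imv z) = z := by
  ext i; simp [rev, xy, imv, Complex.re_add_im]
lemma xy_T {x y : R3} : xy x y ∈ TLambda3 ↔ y ∈ Lambda3 := by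
  rw [T_eq, mem_preimage, imv_xy]

lemma dual_lower {y : R3} (hy : y ∈ Lambda3) :
    ∃ δ > 0, ∀ ξ ∈ Cc, δ * ‖ξ‖ ≤ dotR y ξ := by
  obtain ⟨δ, hδ, hb⟩ := Metric.isOpen_iff.1 isOpen_L y hy
  refine ⟨δ / 2, by positivity, fun ξ hξ => ?_⟩
  let u : R3 := fun i => if 0 ≤ ξ i then 1 else -1
  have hu : ∀ i, u i * ξ i = |ξ i| := by
    intro i
    simp only [u]
    split_ifs with h
    · rw [abs_of_nonneg h]; ring
    · rw [abs_of_neg (not_le.1 h)]; ring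
  have hmem : y - (δ / 2) • u ∈ Lambda3 := by
    apply hb
    rw [mem_ball_iff_norm]
    have : ‖(δ/2) • u‖ ≤ δ / 2 := by
      rw [pi_norm_le_iff_of_nonneg (by positivity)]
      intro i
      simp only [Pi.smul_apply, u, smul_eq_mul, norm_mul, Real.norm_eq_abs]
      split_ifs <;> simp [abs_of_pos (half_pos hδ)]
    have h2 : y - (δ/2) • u - y = -((δ/2) • u) := by abel
    rw [h2, norm_neg]; linarith
  have h := hξ _ hmem
  have h3 : dotR (y - (δ / 2) • u) ξ = dotR y ξ - δ / 2 * (|ξ 0| + |ξ 1| + |ξ 2|) := by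
    rw [← hu, ← hu, ← hu]; simp only [dotR, Pi.sub_apply, Pi.smul_apply, smul_eq_mul]; ring
  have h4 : ‖ξ‖ ≤ |ξ 0| + |ξ 1| + |ξ 2| := by
    rw [pi_norm_le_iff_of_nonneg (by positivity)]
    intro i
    rw [Real.norm_eq_abs]
    have := abs_nonneg (ξ 0); have := abs_nonneg (ξ 1); have := abs_nonneg (ξ 2)
    fin_cases i <;> simp <;> linarith
  nlinarith [mul_le_mul_of_nonneg_left h4 (half_pos hδ).le]

lemma Cc_closure : Cc ⊆ closure Lambda3 := by
  intro ξ hξ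
  set s := Real.sqrt (ξ 1 ^ 2 + ξ 2 ^ 2) with hs
  have hs2 : s ^ 2 = ξ 1 ^ 2 + ξ 2 ^ 2 := Real.sq_sqrt (by positivity)
  have hs0 : 0 ≤ s := Real.sqrt_nonneg _
  have key : ∀ δ > 0, 0 ≤ (s + δ) * ξ 0 - s ^ 2 := by
    intro δ hδ
    have : (![s + δ, - ξ 1, - ξ 2] : R3) ∈ Lambda3 := by
      rw [mem_L]; simp; exact ⟨by positivity, by nlinarith⟩
    have := hξ _ this
    simp only [dotR, Matrix.cons_val] at this
    nlinarith
  have h00 : 0 ≤ ξ 0 := by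
    have := hξ _ e0_L
    simpa [dotR, e0] using this
  have h0 : s ≤ ξ 0 := by
    by_contra hlt
    push Not at hlt
    rcases h00.eq_or_lt with h | h
    · have := key 1 one_pos
      rw [← h] at this hlt; nlinarith
    · have h1 := key ((s - ξ 0) / 2) (by linarith)
      nlinarith
  have : Tendsto (fun n : ℕ => ξ + (1 / ((n : ℝ) + 1)) • e0) atTop (𝓝 (ξ + (0:ℝ) • e0)) :=
    tendsto_const_nhds.add (tendsto_one_div_add_atTop_nhds_zero_nat.smul_const e0)
  rw [zero_smul, add_zero] at this
  refine mem_closure_of_tendsto this (Eventually.of_forall fun n => ?_)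
  have hp : 0 < 1 / ((n : ℝ) + 1) := by positivity
  rw [mem_L]
  generalize 1 / ((n : ℝ) + 1) = p at hp
  simp [e0]
  constructor
  · positivity
  · nlinarith

lemma Cc_diff_null : volume (Cc \ Lambda3) = 0 := by
  refine measure_mono_null ?_ (convex_L.addHaar_frontier volume)
  rw [isOpen_L.frontier_eq]
  exact sdiff_subset_sdiff_left Cc_closure

lemma isClosed_Cc : IsClosed Cc := by
  have : Cc = ⋂ y ∈ Lambda3, {ξ | 0 ≤ dotR y ξ} := by ext; simp [Cc]
  rw [this]
  refine isClosed_biInter fun y _ => isClosed_le (by fun_prop) ?_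
  unfold dotR; fun_prop

lemma dotC_xy (x y ξ : R3) : dotC (xy x y) ξ = dotR x ξ + dotR y ξ * Complex.I := by
  simp [dotC, dotR, xy]; ring

lemma dotC_eq (z : C3) (ξ : R3) : dotC z ξ = dotR (rev z) ξ + dotR (imv z) ξ * Complex.I := by
  rw [← dotC_xy, xy_rev_imv]

lemma norm_exp_dot (z : C3) (ξ : R3) :
    ‖Complex.exp (2 * Real.pi * Complex.I * dotC z ξ)‖ = Real.exp (-2 * Real.pi * dotR (imv z) ξ) := by
  rw [Complex.norm_exp, dotC_eq]
  congr 1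
  simp

lemma continuous_dotR_right (y : R3) : Continuous (dotR y) := by unfold dotR; fun_prop
lemma continuous_dotC_right (z : C3) : Continuous (dotC z) := by unfold dotC; fun_prop

/-- integrability of exponentials on the dual cone, with a polynomial decay majorant -/
lemma integrable_exp_norm {a : ℝ} (ha : 0 < a) :
    Integrable (fun ξ : R3 => Real.exp (-a * ‖ξ‖)) := by
  have hlim : Tendsto (fun t : ℝ => (1 + t) ^ 4 * Real.exp (-a * t)) atTop (𝓝 0) := by
    have h := (tendsto_id.atTop_add (tendsto_const_nhds (x := (1:ℝ)))).comp (tendsto_id (α := ℝ) (x := atTop))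
    have := (Real.tendsto_pow_mul_exp_neg_atTop_nhds_zero 4)
    have h2 : Tendsto (fun t : ℝ => a * (1 + t)) atTop atTop :=
      (tendsto_const_nhds.add_atTop tendsto_id).const_mul_atTop ha
    have h3 := (this.comp h2).const_mul (Real.exp a / a ^ 4)
    rw [mul_zero] at h3
    refine h3.congr fun t => ?_
    simp only [Function.comp]
    have : Real.exp (-(a * (1 + t))) = Real.exp (-a * t) / Real.exp a := by
      rw [← Real.exp_sub]; congr 1; ring
    rw [this]; field_simp
  have hb : ∃ M, ∀ t : ℝ, 0 ≤ t → (1 + t) ^ 4 * Real.exp (-a * t) ≤ M := by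
    obtain ⟨A, hA⟩ := (hlim.eventually (ge_mem_nhds (zero_lt_one))).exists_forall_of_atTop
    obtain ⟨B, hB⟩ := (isCompact_Icc (a := (0:ℝ)) (b := A)).bddAbove_image
      (f := fun t : ℝ => (1 + t) ^ 4 * Real.exp (-a * t)) (by fun_prop)
    refine ⟨max B 1, fun t ht => ?_⟩
    rcases le_total A t with h | h
    · exact (hA t h).trans (le_max_right _ _)
    · exact (hB ⟨t, ⟨ht, h⟩, rfl⟩).trans (le_max_left _ _)
  obtain ⟨M, hM⟩ := hb
  have := (integrable_one_add_norm (E := R3) (μ := volume) (r := 4) (by simp; norm_num)).const_mul M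
  refine this.mono' (by fun_prop) (Eventually.of_forall fun ξ => ?_)
  rw [Real.norm_eq_abs, abs_of_pos (Real.exp_pos _), Real.rpow_neg (by positivity)]
  have h4 : (1 + ‖ξ‖) ^ (4:ℝ) = (1 + ‖ξ‖) ^ 4 := by norm_cast
  rw [h4, ← div_eq_mul_inv, le_div_iff₀ (by positivity), mul_comm]
  exact hM _ (norm_nonneg _)

end BC

namespace BC
open Filter Topology

lemma fderiv_bound {f : C3 → ℂ} {z0 : C3} {r b : ℝ} (hr : 0 < r)
    (hd : DifferentiableOn ℂ f (Metric.ball z0 r)) (hB : ∀ z ∈ Metric.ball z0 r, ‖f z‖ ≤ b) :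
    ‖fderiv ℂ f z0‖ ≤ 2 * b / r := by
  apply Complex.norm_fderiv_le_div_of_mapsTo_ball hd _ hr
  intro z hz
  rw [mem_closedBall_iff_norm]
  have h1 := hB z hz
  have h2 := hB z0 (Metric.mem_ball_self hr)
  have := norm_sub_le (f z) (f z0)
  linarith

lemma clm_eq_sum (A : C3 →L[ℂ] ℂ) :
    A = ∑ i, (A (Pi.single i 1)) • (ContinuousLinearMap.proj i : C3 →L[ℂ] ℂ) := by
  ext v
  conv_lhs => rw [← Finset.univ_sum_single v]
  rw [map_sum]
  simp only [_root_.sum_apply, _root_.smul_apply,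
    ContinuousLinearMap.proj_apply, smul_eq_mul]
  refine Finset.sum_congr rfl fun i _ => ?_
  have : Pi.single i (v i) = (v i) • (Pi.single i (1:ℂ) : C3) := by
    rw [← Pi.single_smul]; simp
  rw [this, map_smul, smul_eq_mul, mul_comm]

lemma norm_single (i : Fin 3) : ‖(Pi.single i 1 : C3)‖ = 1 := by
  rw [Pi.norm_single]; simp

/-- Differentiation of holomorphic functions under the integral sign. -/
lemma holo_param {α : Type*} [MeasurableSpace α] {μ : Measure α} (H : C3 → α → ℂ) {z0 : C3} {r : ℝ}
    (hr : 0 < r) {b : α → ℝ} (hb : Integrable b μ)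
    (hm : ∀ z ∈ Metric.ball z0 r, AEStronglyMeasurable (H z) μ)
    (hd : ∀ a, DifferentiableOn ℂ (fun z => H z a) (Metric.ball z0 r))
    (hB : ∀ a, ∀ z ∈ Metric.ball z0 r, ‖H z a‖ ≤ b a) :
    HasFDerivAt (fun z => ∫ a, H z a ∂μ) (∫ a, fderiv ℂ (fun z => H z a) z0 ∂μ) z0 ∧
      Integrable (fun a => fderiv ℂ (fun z => H z a) z0) μ := by
  have hz0 : z0 ∈ Metric.ball z0 r := Metric.mem_ball_self hr
  have hbd : ∀ a, ∀ z ∈ Metric.ball z0 (r / 2), ‖fderiv ℂ (fun z => H z a) z‖ ≤ 4 / r * b a := by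
    intro a z hz
    have hsub : Metric.ball z (r / 2) ⊆ Metric.ball z0 r := by
      apply Metric.ball_subset_ball'
      rw [Metric.mem_ball] at hz; linarith
    have := fderiv_bound (half_pos hr) ((hd a).mono hsub) (fun w hw => hB a w (hsub hw))
    refine this.trans (le_of_eq ?_)
    field_simp; ring
  have hmeas : AEStronglyMeasurable (fun a => fderiv ℂ (fun z => H z a) z0) μ := by
    have : (fun a => fderiv ℂ (fun z => H z a) z0) = fun a => ∑ i : Fin 3,
        ((fderiv ℂ (fun z => H z a) z0) (Pi.single i 1)) •
          (ContinuousLinearMap.proj i : C3 →L[ℂ] ℂ) := by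
      ext1 a; exact clm_eq_sum _
    rw [this]
    refine Finset.aestronglyMeasurable_fun_sum _ fun i _ => ?_
    refine AEStronglyMeasurable.smul_const ?_ _
    -- difference quotients
    obtain ⟨N, hN⟩ := exists_nat_one_div_lt hr
    have hmem : ∀ n : ℕ, z0 + ((((n:ℝ) + N + 1 : ℝ)) : ℂ)⁻¹ • (Pi.single i 1 : C3) ∈ Metric.ball z0 r := by
      intro n
      rw [mem_ball_iff_norm, add_sub_cancel_left, norm_smul, norm_inv, Complex.norm_real,
        Real.norm_of_nonneg (by positivity), ← one_div]
      have : ‖(Pi.single i 1 : C3)‖ ≤ 1 := (norm_single i).le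
      have h1 : 1 / ((n:ℝ) + N + 1) ≤ 1 / ((N:ℝ) + 1) := by
        apply one_div_le_one_div_of_le (by positivity); linarith [(Nat.cast_nonneg n : (0:ℝ) ≤ n)]
      have h2 : 0 < 1 / ((n:ℝ) + N + 1) := by positivity
      nlinarith [norm_nonneg (Pi.single i 1 : C3)]
    refine aestronglyMeasurable_of_tendsto_ae atTop
      (f := fun (n : ℕ) a => ((((n:ℝ) + N + 1 : ℝ)) : ℂ) •
        (H (z0 + ((((n:ℝ) + N + 1 : ℝ)) : ℂ)⁻¹ • (Pi.single i 1 : C3)) a - H z0 a)) ?_ ?_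
    · intro n
      exact ((hm _ (hmem n)).fun_sub (hm _ hz0)).fun_const_smul _
    · refine Eventually.of_forall fun a => ?_
      have hda : HasFDerivAt (fun z => H z a) (fderiv ℂ (fun z => H z a) z0) z0 :=
        ((hd a).differentiableAt (Metric.ball_mem_nhds _ hr)).hasFDerivAt
      have hlt : Tendsto (fun n : ℕ => ((n:ℝ) + N + 1 : ℝ)) atTop atTop := by
        simp only [add_assoc]
        exact tendsto_atTop_add_const_right _ _ tendsto_natCast_atTop_atTop
      refine hda.lim (Pi.single i 1) ?_
      simp only [Complex.norm_real]
      exact tendsto_norm_atTop_atTop.comp hlt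
  have hint : Integrable (fun a => fderiv ℂ (fun z => H z a) z0) μ :=
    (hb.const_mul (4 / r)).mono' hmeas
      (Eventually.of_forall fun a => hbd a z0 (Metric.mem_ball_self (half_pos hr)))
  refine ⟨?_, hint⟩
  refine hasFDerivAt_integral_of_dominated_of_fderiv_le (F' := fun z a => fderiv ℂ (fun z => H z a) z)
    (Metric.ball_mem_nhds z0 (half_pos hr)) ?_ ?_ hmeas
    (Eventually.of_forall hbd) (hb.const_mul (4 / r)) ?_
  · filter_upwards [Metric.ball_mem_nhds z0 hr] with z hz using hm z hz
  · exact hb.mono' (hm _ hz0) (Eventually.of_forall fun a => hB a z0 hz0)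
  · refine Eventually.of_forall fun a z hz => ?_
    have hsub : Metric.ball z0 (r/2) ⊆ Metric.ball z0 r := Metric.ball_subset_ball (by linarith)
    exact ((hd a).differentiableAt (Metric.isOpen_ball.mem_nhds (hsub hz))).hasFDerivAt

lemma pd_line {F : C3 → ℂ} {z : C3} (i : Fin 3) (hF : DifferentiableAt ℂ F z) :
    HasDerivAt (fun w : ℂ => F (z + w • (Pi.single i 1 : C3))) (pd i F z) 0 := by
  have h1 : HasDerivAt (fun w : ℂ => z + w • (Pi.single i 1 : C3)) (Pi.single i 1 : C3) 0 := by
    simpa using ((hasDerivAt_id (0:ℂ)).smul_const (Pi.single i 1 : C3)).const_add z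
  have h2 : HasFDerivAt F (fderiv ℂ F z) (z + (0:ℂ) • (Pi.single i 1 : C3)) := by
    simpa using hF.hasFDerivAt
  exact h2.comp_hasDerivAt (0:ℂ) h1

lemma diff_pd {U : Set C3} (hU : IsOpen U) {F : C3 → ℂ} (hF : DifferentiableOn ℂ F U) (i : Fin 3) :
    DifferentiableOn ℂ (pd i F) U := by
  intro z0 hz0
  -- local bound
  have hc : ContinuousAt F z0 := (hF.differentiableAt (hU.mem_nhds hz0)).continuousAt
  have hev : ∀ᶠ z in 𝓝 z0, z ∈ U ∧ ‖F z‖ < ‖F z0‖ + 1 :=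
    (hU.eventually_mem hz0).and (hc.norm.eventually_lt_const (by linarith))
  obtain ⟨ρ, hρ, hball⟩ := Metric.eventually_nhds_iff_ball.1 hev
  set R := ρ / 4 with hR
  have hR0 : 0 < R := by positivity
  set M := ‖F z0‖ + 1
  have hmem : ∀ z ∈ Metric.ball z0 R, ∀ w : ℂ, ‖w‖ ≤ R → z + w • (Pi.single i 1 : C3) ∈ Metric.ball z0 ρ := by
    intro z hz w hw
    rw [mem_ball_iff_norm] at *
    have : z + w • (Pi.single i 1 : C3) - z0 = (z - z0) + w • (Pi.single i 1 : C3) := by abel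
    rw [this]
    refine (norm_add_le _ _).trans_lt ?_
    rw [norm_smul]
    have : ‖(Pi.single i 1 : C3)‖ ≤ 1 := (norm_single i).le
    nlinarith [norm_nonneg w, norm_nonneg (Pi.single i 1 : C3)]
  have hrep : ∀ z ∈ Metric.ball z0 R, pd i F z = ((2 * Real.pi * Complex.I : ℂ)⁻¹) • ∫ θ in Ioc 0 (2 * Real.pi),
      deriv (circleMap 0 R) θ • (((circleMap 0 R θ - 0) ^ 2)⁻¹ • F (z + circleMap 0 R θ • (Pi.single i 1 : C3))) := by
    intro z hz
    have h0 : z ∈ U := (hball z (by simpa using hmem z hz 0 (by simp [hR0.le]))).1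
    rw [← (pd_line i (hF.differentiableAt (hU.mem_nhds h0))).deriv]
    have hop : IsOpen {w : ℂ | z + w • (Pi.single i 1 : C3) ∈ U} := hU.preimage (by fun_prop)
    rw [← Complex.cderiv_eq_deriv (r := R) hop ?_ hR0 ?_]
    · rw [Complex.cderiv, circleIntegral, intervalIntegral.integral_of_le (by positivity)]
    · intro w hw
      refine DifferentiableAt.differentiableWithinAt ?_
      exact (hF.differentiableAt (hU.mem_nhds hw)).comp w (by fun_prop)
    · intro w hw
      rw [mem_closedBall_iff_norm, sub_zero] at hw
      exact (hball _ (hmem z hz w hw)).1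
  refine DifferentiableAt.differentiableWithinAt ?_
  refine DifferentiableAt.congr_of_eventuallyEq (f := fun z => ((2 * Real.pi * Complex.I : ℂ)⁻¹) • ∫ θ in Ioc 0 (2 * Real.pi),
      deriv (circleMap 0 R) θ • (((circleMap 0 R θ - 0) ^ 2)⁻¹ • F (z + circleMap 0 R θ • (Pi.single i 1 : C3)))) ?_ ?_
  swap
  · filter_upwards [Metric.ball_mem_nhds z0 hR0] with z hz using hrep z hz
  refine DifferentiableAt.fun_const_smul ?_ _
  have hcn : ∀ θ, ‖circleMap 0 R θ‖ = R := fun θ => by simp [abs_of_pos hR0]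
  refine (holo_param (r := R) (b := fun _ => R * ((R^2)⁻¹ * M)) _ hR0 ?_ ?_ ?_ ?_).1.differentiableAt
  · apply integrable_const
  · intro z hz
    have : ContinuousOn F U := hF.continuousOn
    have hcont : Continuous fun θ => F (z + circleMap 0 R θ • (Pi.single i 1 : C3)) := by
      rw [← continuousOn_univ]
      refine this.comp (t := U) (s := univ) (by fun_prop) fun θ _ => ?_
      exact (hball _ (hmem z hz _ (hcn θ).le)).1
    have h2 : Continuous fun θ => ((circleMap 0 R θ - 0) ^ 2)⁻¹ := by
      refine Continuous.inv₀ (by fun_prop) fun θ => ?_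
      have : circleMap 0 R θ ≠ 0 := by rw [← norm_pos_iff, hcn]; exact hR0
      simpa using this
    have h3 : Continuous fun θ => deriv (circleMap 0 R) θ := by
      simp only [deriv_circleMap]; fun_prop
    exact (h3.smul (h2.smul hcont)).aestronglyMeasurable
  · intro θ z hz
    refine DifferentiableAt.differentiableWithinAt ?_
    refine DifferentiableAt.fun_const_smul (DifferentiableAt.fun_const_smul ?_ _) _
    exact (hF.differentiableAt (hU.mem_nhds (hball _ (hmem z hz _ (hcn θ).le)).1)).comp z (by fun_prop)
  · intro θ z hz
    rw [norm_smul, norm_smul, deriv_circleMap, norm_mul, Complex.norm_I, mul_one, hcn, sub_zero, norm_inv, norm_pow, hcn]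
    have := (hball _ (hmem z hz _ (hcn θ).le)).2.le
    gcongr

lemma diff_box {U : Set C3} (hU : IsOpen U) {F : C3 → ℂ} (hF : DifferentiableOn ℂ F U) :
    DifferentiableOn ℂ (Box F) U :=
  (((diff_pd hU (diff_pd hU hF 0) 0).neg).add (diff_pd hU (diff_pd hU hF 1) 1)).add
    (diff_pd hU (diff_pd hU hF 2) 2)

lemma diff_box_iter {U : Set C3} (hU : IsOpen U) (m : ℕ) : ∀ {F : C3 → ℂ}, DifferentiableOn ℂ F U →
    DifferentiableOn ℂ (Box^[m] F) U := by
  induction m with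
  | zero => intro F hF; simpa using hF
  | succ n ih => intro F hF; rw [Function.iterate_succ_apply]; exact ih (diff_box hU hF)

lemma eqOn_pd {U : Set C3} (hU : IsOpen U) {F G : C3 → ℂ} (h : EqOn F G U) (i : Fin 3) :
    EqOn (pd i F) (pd i G) U := by
  intro z hz
  unfold pd
  rw [(h.eventuallyEq_of_mem (hU.mem_nhds hz)).fderiv_eq]

lemma eqOn_box {U : Set C3} (hU : IsOpen U) {F G : C3 → ℂ} (h : EqOn F G U) :
    EqOn (Box F) (Box G) U := by
  intro z hz
  unfold Box
  rw [eqOn_pd hU (eqOn_pd hU h 0) 0 hz, eqOn_pd hU (eqOn_pd hU h 1) 1 hz,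
    eqOn_pd hU (eqOn_pd hU h 2) 2 hz]

lemma eqOn_box_iter {U : Set C3} (hU : IsOpen U) (m : ℕ) : ∀ {F G : C3 → ℂ}, EqOn F G U →
    EqOn (Box^[m] F) (Box^[m] G) U := by
  induction m with
  | zero => intro F G h; simpa using h
  | succ n ih => intro F G h; rw [Function.iterate_succ_apply, Function.iterate_succ_apply]; exact ih (eqOn_box hU h)

/-- locally uniform convergence -/
def UC (U : Set C3) (Fn : ℕ → C3 → ℂ) (F : C3 → ℂ) : Prop :=
  ∀ z ∈ U, ∃ r > 0, ∀ δ > 0, ∀ᶠ n in atTop, ∀ w ∈ Metric.ball z r, ‖Fn n w - F w‖ ≤ δ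

lemma UC.pd {U : Set C3} (hU : IsOpen U) {Fn : ℕ → C3 → ℂ} {F : C3 → ℂ} (h : UC U Fn F)
    (hFn : ∀ n, DifferentiableOn ℂ (Fn n) U) (hF : DifferentiableOn ℂ F U) (i : Fin 3) :
    UC U (fun n => _root_.pd i (Fn n)) (_root_.pd i F) := by
  intro z hz
  obtain ⟨r, hr, hδ⟩ := h z hz
  obtain ⟨ρ, hρ, hb⟩ := Metric.isOpen_iff.1 hU z hz
  set s := min r ρ with hs
  have hs0 : 0 < s := lt_min hr hρ
  refine ⟨s / 2, by positivity, fun δ hδ0 => ?_⟩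
  filter_upwards [hδ (δ * s / 4) (by positivity)] with n hn w hw
  have hsub : Metric.ball w (s / 2) ⊆ Metric.ball z s := by
    apply Metric.ball_subset_ball'
    rw [Metric.mem_ball] at hw; linarith
  have hsU : Metric.ball z s ⊆ U := (Metric.ball_subset_ball (min_le_right _ _)).trans hb
  have hwU : w ∈ U := hsU (hsub (Metric.mem_ball_self (by positivity)))
  have h1 : fderiv ℂ (fun v => Fn n v - F v) w = fderiv ℂ (Fn n) w - fderiv ℂ F w :=
    fderiv_fun_sub ((hFn n).differentiableAt (hU.mem_nhds hwU)) (hF.differentiableAt (hU.mem_nhds hwU))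
  have h2 : ‖fderiv ℂ (fun v => Fn n v - F v) w‖ ≤ 2 * (δ * s / 4) / (s / 2) := by
    apply fderiv_bound (by positivity)
    · exact ((hFn n).sub hF).mono (hsub.trans hsU)
    · exact fun v hv => hn v (Metric.ball_subset_ball (min_le_left _ _) (hsub hv))
  have h3 : _root_.pd i (Fn n) w - _root_.pd i F w = fderiv ℂ (fun v => Fn n v - F v) w (Pi.single i 1) := by
    rw [h1]; rfl
  rw [h3]
  refine (ContinuousLinearMap.le_opNorm _ _).trans ?_
  have h5 := norm_single i
  rw [h5, mul_one]
  refine h2.trans (le_of_eq ?_)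
  field_simp; ring

lemma UC.box {U : Set C3} (hU : IsOpen U) {Fn : ℕ → C3 → ℂ} {F : C3 → ℂ} (h : UC U Fn F)
    (hFn : ∀ n, DifferentiableOn ℂ (Fn n) U) (hF : DifferentiableOn ℂ F U) :
    UC U (fun n => Box (Fn n)) (Box F) := by
  have H : ∀ i : Fin 3, UC U (fun n => _root_.pd i (_root_.pd i (Fn n))) (_root_.pd i (_root_.pd i F)) := fun i =>
    (h.pd hU hFn hF i).pd hU (fun n => diff_pd hU (hFn n) i) (diff_pd hU hF i) i
  intro z hz
  obtain ⟨r0, h0, H0⟩ := H 0 z hz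
  obtain ⟨r1, h1, H1⟩ := H 1 z hz
  obtain ⟨r2, h2, H2⟩ := H 2 z hz
  refine ⟨min r0 (min r1 r2), by positivity, fun δ hδ => ?_⟩
  filter_upwards [H0 (δ/3) (by positivity), H1 (δ/3) (by positivity), H2 (δ/3) (by positivity)] with n a0 a1 a2 w hw
  rw [Metric.mem_ball, lt_min_iff, lt_min_iff] at hw
  have b0 := a0 w hw.1
  have b1 := a1 w hw.2.1
  have b2 := a2 w hw.2.2
  have : Box (Fn n) w - Box F w = -(_root_.pd 0 (_root_.pd 0 (Fn n)) w - _root_.pd 0 (_root_.pd 0 F) w)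
    + (_root_.pd 1 (_root_.pd 1 (Fn n)) w - _root_.pd 1 (_root_.pd 1 F) w)
    + (_root_.pd 2 (_root_.pd 2 (Fn n)) w - _root_.pd 2 (_root_.pd 2 F) w) := by
    unfold Box; ring
  rw [this]
  refine (norm_add₃_le).trans ?_
  rw [norm_neg]; linarith

lemma UC.box_iter {U : Set C3} (hU : IsOpen U) (m : ℕ) : ∀ {Fn : ℕ → C3 → ℂ} {F : C3 → ℂ}, UC U Fn F →
    (∀ n, DifferentiableOn ℂ (Fn n) U) → DifferentiableOn ℂ F U →
    UC U (fun n => Box^[m] (Fn n)) (Box^[m] F) := by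
  induction m with
  | zero => intro Fn F h _ _; simpa using h
  | succ k ih =>
    intro Fn F h h1 h2
    simp only [Function.iterate_succ_apply]
    exact ih (h.box hU h1 h2) (fun n => diff_box hU (h1 n)) (diff_box hU h2)

lemma UC.tendsto {U : Set C3} {Fn : ℕ → C3 → ℂ} {F : C3 → ℂ} (h : UC U Fn F) {z : C3} (hz : z ∈ U) :
    Tendsto (fun n => Fn n z) atTop (𝓝 (F z)) := by
  obtain ⟨r, hr, H⟩ := h z hz
  rw [Metric.tendsto_nhds]
  intro ε hε
  filter_upwards [H (ε / 2) (by positivity)] with n hn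
  rw [dist_eq_norm]
  linarith [hn z (Metric.mem_ball_self hr)]

end BC

namespace BC
open Filter Topology

/-- the kernel -/
def ker (z : C3) (ξ : R3) : ℂ := Complex.exp (2 * Real.pi * Complex.I * dotC z ξ)

/-- Laplace transform -/
def Lap (f : R3 → ℂ) (z : C3) : ℂ := ∫ ξ, f ξ * ker z ξ

/-- the class of admissible densities -/
structure LC (f : R3 → ℂ) : Prop where
  meas : AEStronglyMeasurable f volume
  supp : ∀ ξ, ξ ∉ Cc → f ξ = 0
  int : ∀ y ∈ Lambda3, Integrable (fun ξ => ‖f ξ‖ * Real.exp (-2 * Real.pi * dotR y ξ))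

lemma norm_ker (z : C3) (ξ : R3) : ‖ker z ξ‖ = Real.exp (-2 * Real.pi * dotR (imv z) ξ) :=
  norm_exp_dot z ξ

lemma continuous_ker (z : C3) : Continuous (ker z) := by
  unfold ker; have := continuous_dotC_right z; fun_prop

lemma LC.integrable {f : R3 → ℂ} (hf : LC f) {z : C3} (hz : z ∈ TLambda3) :
    Integrable (fun ξ => f ξ * ker z ξ) := by
  refine (hf.int (imv z) hz).mono' (hf.meas.mul (continuous_ker z).aestronglyMeasurable) ?_
  refine Eventually.of_forall fun ξ => ?_
  rw [norm_mul, norm_ker]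

/-- multiplication by `2 π i ξ_j` -/
def mulX (j : Fin 3) (f : R3 → ℂ) : R3 → ℂ := fun ξ => 2 * Real.pi * Complex.I * ξ j * f ξ

lemma LC.mulX {f : R3 → ℂ} (hf : LC f) (j : Fin 3) : LC (mulX j f) := by
  refine ⟨?_, ?_, ?_⟩
  · unfold BC.mulX
    exact (Continuous.aestronglyMeasurable (by fun_prop)).mul hf.meas
  · intro ξ hξ; simp [BC.mulX, hf.supp ξ hξ]
  · intro y hy
    obtain ⟨δ, hδ, hb⟩ := dual_lower hy
    have hy2 : (1/2 : ℝ) • y ∈ Lambda3 := smul_L (by norm_num) hy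
    have hm : AEStronglyMeasurable (fun ξ : R3 => ‖BC.mulX j f ξ‖ * Real.exp (-2 * Real.pi * dotR y ξ)) volume := by
      have h1 : AEStronglyMeasurable (fun ξ : R3 => ‖BC.mulX j f ξ‖) volume := by
        unfold BC.mulX
        exact ((Continuous.aestronglyMeasurable (by fun_prop)).mul hf.meas).norm
      have := continuous_dotR_right y
      exact h1.mul (Continuous.aestronglyMeasurable (by fun_prop))
    refine ((hf.int _ hy2).const_mul (2 / δ)).mono' hm ?_
    refine Eventually.of_forall fun ξ => ?_
    by_cases hξ : ξ ∈ Cc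
    · have h1 := hb ξ hξ
      have h2 : dotR ((1/2 : ℝ) • y) ξ = dotR y ξ / 2 := by simp [dotR]; ring
      rw [h2]
      have h3 : |ξ j| ≤ ‖ξ‖ := norm_le_pi_norm ξ j
      have hn : ‖BC.mulX j f ξ‖ = 2 * Real.pi * |ξ j| * ‖f ξ‖ := by
        simp [BC.mulX, abs_of_pos Real.pi_pos]
      rw [Real.norm_of_nonneg (by positivity), hn]
      have h4 : Real.exp (-2 * Real.pi * dotR y ξ) =
        Real.exp (-(Real.pi * dotR y ξ)) * Real.exp (-2 * Real.pi * (dotR y ξ / 2)) := by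
        rw [← Real.exp_add]; congr 1; ring
      rw [h4]
      have h5 : 2 * Real.pi * |ξ j| * Real.exp (-(Real.pi * dotR y ξ)) ≤ 2 / δ := by
        rw [Real.exp_neg, ← div_eq_mul_inv, div_le_div_iff₀ (Real.exp_pos _) hδ]
        have h6 := Real.add_one_le_exp (Real.pi * dotR y ξ)
        have h7 : δ * |ξ j| ≤ dotR y ξ := (mul_le_mul_of_nonneg_left h3 hδ.le).trans h1
        nlinarith [mul_le_mul_of_nonneg_left h7 Real.pi_pos.le]
      calc _ = (2 * Real.pi * |ξ j| * Real.exp (-(Real.pi * dotR y ξ))) * (‖f ξ‖ * Real.exp (-2 * Real.pi * (dotR y ξ / 2))) := by ring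
        _ ≤ _ := by gcongr
    · simp [BC.mulX, hf.supp ξ hξ]

lemma hasFDerivAt_dotC (z : C3) (ξ : R3) :
    HasFDerivAt (fun z => dotC z ξ) (∑ i, (ξ i : ℂ) • (ContinuousLinearMap.proj i : C3 →L[ℂ] ℂ)) z := by
  have : (fun z => dotC z ξ) = ⇑(∑ i, (ξ i : ℂ) • (ContinuousLinearMap.proj i : C3 →L[ℂ] ℂ)) := by
    ext z; simp [dotC, Fin.sum_univ_three]; ring
  rw [this]
  exact ContinuousLinearMap.hasFDerivAt _

lemma hasFDerivAt_ker (z : C3) (ξ : R3) :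
    HasFDerivAt (fun z => ker z ξ) (ker z ξ • ((2 * Real.pi * Complex.I : ℂ) •
      (∑ i, (ξ i : ℂ) • (ContinuousLinearMap.proj i : C3 →L[ℂ] ℂ)))) z :=
  ((hasFDerivAt_dotC z ξ).const_mul _).cexp

lemma LC.hasFDerivAt {f : R3 → ℂ} (hf : LC f) {z0 : C3} (hz : z0 ∈ TLambda3) :
    DifferentiableAt ℂ (Lap f) z0 ∧ ∀ j, pd j (Lap f) z0 = Lap (BC.mulX j f) z0 := by
  have hy2 : (1/2 : ℝ) • imv z0 ∈ Lambda3 := smul_L (by norm_num) hz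
  have hop : IsOpen {z : C3 | imv z - (1/2 : ℝ) • imv z0 ∈ Lambda3} :=
    isOpen_L.preimage (continuous_imv.sub continuous_const)
  have hz0 : z0 ∈ {z : C3 | imv z - (1/2 : ℝ) • imv z0 ∈ Lambda3} := by
    have : imv z0 - (1/2 : ℝ) • imv z0 = (1/2 : ℝ) • imv z0 := by
      ext i; simp; ring
    rw [mem_ofPred_eq, this]; exact hy2
  obtain ⟨r, hr, hb⟩ := Metric.isOpen_iff.1 hop z0 hz0
  have H := holo_param (μ := volume) (fun z ξ => f ξ * ker z ξ) hr (z0 := z0) (hf.int _ hy2) ?_ ?_ ?_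
  · obtain ⟨H1, H2⟩ := H
    refine ⟨H1.differentiableAt, fun j => ?_⟩
    have : pd j (Lap f) z0 = (∫ a, fderiv ℂ (fun z => f a * ker z a) z0) (Pi.single j 1) := by
      unfold pd
      exact congrArg (fun A : C3 →L[ℂ] ℂ => A (Pi.single j 1)) H1.fderiv
    rw [this, ContinuousLinearMap.integral_apply H2]
    unfold Lap
    refine integral_congr_ae (Eventually.of_forall fun ξ => ?_)
    simp only []
    rw [((hasFDerivAt_ker z0 ξ).const_mul (f ξ)).fderiv]
    simp only [_root_.smul_apply, _root_.sum_apply, ContinuousLinearMap.proj_apply, smul_eq_mul, BC.mulX]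
    have : ∑ i, (ξ i : ℂ) * (Pi.single j (1:ℂ) : C3) i = ξ j := by
      simp [Pi.single_apply]
    rw [this]; ring
  · intro z _
    exact hf.meas.mul (continuous_ker z).aestronglyMeasurable
  · intro ξ z _
    exact ((hasFDerivAt_ker z ξ).const_mul (f ξ)).differentiableAt.differentiableWithinAt
  · intro ξ z hzb
    by_cases hξ : ξ ∈ Cc
    · rw [norm_mul, norm_ker]
      have := hξ _ (hb hzb)
      have h2 : dotR (imv z - (1/2 : ℝ) • imv z0) ξ = dotR (imv z) ξ - dotR ((1/2 : ℝ) • imv z0) ξ := by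
        simp [dotR]; ring
      rw [h2] at this
      gcongr ?_ * Real.exp ?_
      · nlinarith [Real.pi_pos]
    · simp [hf.supp ξ hξ]

lemma LC.diff {f : R3 → ℂ} (hf : LC f) : DifferentiableOn ℂ (Lap f) TLambda3 := fun _ hz =>
  (hf.hasFDerivAt hz).1.differentiableWithinAt

/-- multiplication by the symbol of Box -/
def mulD (f : R3 → ℂ) : R3 → ℂ := fun ξ => (4 * Real.pi ^ 2 * DeltaL ξ : ℝ) * f ξ

lemma LC.add {f g : R3 → ℂ} (hf : LC f) (hg : LC g) : LC (fun ξ => f ξ + g ξ) := by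
  refine ⟨hf.meas.add hg.meas, fun ξ hξ => by simp [hf.supp ξ hξ, hg.supp ξ hξ], fun y hy => ?_⟩
  have hc := continuous_dotR_right y
  refine ((hf.int y hy).add (hg.int y hy)).mono'
    (((hf.meas.add hg.meas).norm).mul (Continuous.aestronglyMeasurable (by fun_prop))) ?_
  refine Eventually.of_forall fun ξ => ?_
  rw [Real.norm_of_nonneg (by positivity), Pi.add_apply, ← add_mul]
  gcongr
  exact norm_add_le _ _

lemma LC.neg {f : R3 → ℂ} (hf : LC f) : LC (fun ξ => - f ξ) :=
  ⟨hf.meas.neg, fun ξ hξ => by simp [hf.supp ξ hξ], fun y hy => by simpa using hf.int y hy⟩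

lemma mulD_eq (f : R3 → ℂ) : mulD f =
    fun ξ => (- mulX 0 (mulX 0 f) ξ + mulX 1 (mulX 1 f) ξ) + mulX 2 (mulX 2 f) ξ := by
  ext ξ
  simp only [mulD, mulX, DeltaL]
  push_cast
  linear_combination (4 * (Real.pi:ℂ)^2 * ((ξ 0:ℂ)^2 - (ξ 1 : ℂ)^2 - (ξ 2 : ℂ)^2) * f ξ) * Complex.I_sq

lemma LC.mulD {f : R3 → ℂ} (hf : LC f) : LC (mulD f) := by
  rw [mulD_eq]
  exact (((hf.mulX 0).mulX 0).neg.add ((hf.mulX 1).mulX 1)).add ((hf.mulX 2).mulX 2)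

lemma LC.box {f : R3 → ℂ} (hf : LC f) : EqOn (Box (Lap f)) (Lap (BC.mulD f)) TLambda3 := by
  intro z hz
  have h2 : ∀ j, pd j (pd j (Lap f)) z = Lap (BC.mulX j (BC.mulX j f)) z := by
    intro j
    rw [eqOn_pd isOpen_T (fun w hw => (hf.hasFDerivAt hw).2 j) j hz]
    exact ((hf.mulX j).hasFDerivAt hz).2 j
  unfold Box
  rw [h2, h2, h2, mulD_eq]
  unfold Lap
  have i0 := ((hf.mulX 0).mulX 0).integrable hz
  have i1 := ((hf.mulX 1).mulX 1).integrable hz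
  have i2 := ((hf.mulX 2).mulX 2).integrable hz
  have e1 : ∫ ξ, ((-(BC.mulX 0 (BC.mulX 0 f) ξ * ker z ξ) + BC.mulX 1 (BC.mulX 1 f) ξ * ker z ξ) + BC.mulX 2 (BC.mulX 2 f) ξ * ker z ξ) = _ := integral_add (i0.neg.add i1) i2
  have e2 : ∫ ξ, (-(BC.mulX 0 (BC.mulX 0 f) ξ * ker z ξ) + BC.mulX 1 (BC.mulX 1 f) ξ * ker z ξ) = _ := integral_add i0.neg i1
  have e3 : ∫ ξ, (-(BC.mulX 0 (BC.mulX 0 f) ξ * ker z ξ)) = _ := integral_neg _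
  have e1' := e1.trans (congrArg (· + _) (e2.trans (congrArg (· + _) e3)))
  refine Eq.trans e1'.symm ?_
  refine integral_congr_ae (Eventually.of_forall fun ξ => ?_)
  simp only []
  ring

/-- iterated symbol -/
def mulDm (m : ℕ) (f : R3 → ℂ) : R3 → ℂ := fun ξ => ((4 * Real.pi ^ 2 * DeltaL ξ : ℝ) : ℂ) ^ m * f ξ

lemma LC.mulDm {f : R3 → ℂ} (hf : LC f) (m : ℕ) : LC (mulDm m f) := by
  induction m with
  | zero =>
    have : BC.mulDm 0 f = f := by ext; simp [BC.mulDm]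
    rwa [this]
  | succ k ih =>
    convert ih.mulD using 1
    ext ξ; simp only [BC.mulDm, BC.mulD]; ring

lemma LC.box_iter (m : ℕ) : ∀ {f : R3 → ℂ}, LC f →
    EqOn (Box^[m] (Lap f)) (Lap (BC.mulDm m f)) TLambda3 := by
  induction m with
  | zero =>
    intro f _ z _
    have : BC.mulDm 0 f = f := by ext; simp [BC.mulDm]
    rw [this]; rfl
  | succ k ih =>
    intro f hf z hz
    rw [Function.iterate_succ_apply, eqOn_box_iter isOpen_T k hf.box hz, ih hf.mulD hz]
    congr 1
    ext ξ; simp only [BC.mulDm, BC.mulD]; ring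

end BC

namespace BC
open Filter Topology
open scoped FourierTransform SchwartzMap ContDiff

lemma plancherel_aux {V : Type*} [NormedAddCommGroup V] [InnerProductSpace ℝ V] [FiniteDimensional ℝ V]
    [MeasurableSpace V] [BorelSpace V] {h : V → ℂ} (h1 : Integrable h) (h2 : MemLp h 2 volume) :
    ∫⁻ x, (‖𝓕 h x‖₊ : ℝ≥0∞) ^ 2 = ∫⁻ x, (‖h x‖₊ : ℝ≥0∞) ^ 2 := by
  set g : Lp ℂ 2 (volume : Measure V) := h2.toLp h with hg
  have hcont : Continuous (𝓕 h) :=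
    VectorFourier.fourierIntegral_continuous Real.continuous_fourierChar continuous_inner h1
  have key : ∀ᵐ x, (𝓕 g : Lp ℂ 2 (volume : Measure V)) x = 𝓕 h x := by
    refine ae_eq_of_integral_contDiff_smul_eq ?_ hcont.locallyIntegrable ?_
    · exact (Lp.memLp _).locallyIntegrable (by norm_num)
    intro φ φs φc
    have hg₁ : HasCompactSupport (Complex.ofRealCLM ∘ φ) := φc.comp_left rfl
    have hg₂ : ContDiff ℝ ∞ (Complex.ofRealCLM ∘ φ) := by fun_prop
    set ψ : 𝓢(V, ℂ) := hg₁.toSchwartzMap hg₂ with hψ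
    have hψa : ∀ x, ψ x = (φ x : ℂ) := fun x => rfl
    have e1 := congrArg (fun T => T ψ) (Lp.fourier_toTemperedDistribution_eq g)
    simp only [TemperedDistribution.fourier_apply, Lp.toTemperedDistribution_apply] at e1
    have e2 : ∫ x, φ x • (𝓕 g : Lp ℂ 2 (volume : Measure V)) x = ∫ x, ψ x • (𝓕 g : Lp ℂ 2 (volume : Measure V)) x := by
      simp [hψa]
    have e4 : ∫ x, φ x • 𝓕 h x = ∫ x, ψ x • 𝓕 h x := by
      simp [hψa]
    rw [e2, e4, ← e1]
    have e3 : ∫ x, 𝓕 ψ x • g x = ∫ x, 𝓕 ψ x • h x := by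
      refine integral_congr_ae ?_
      filter_upwards [h2.coeFn_toLp] with x hx
      rw [hx]
    rw [e3]
    have := VectorFourier.integral_fourierIntegral_smul_eq_flip (L := innerₗ V) (μ := volume) (ν := volume)
      Real.continuous_fourierChar continuous_inner ψ.integrable h1
    rw [flip_innerₗ] at this
    exact this
  have n1 : eLpNorm (𝓕 h) 2 volume = eLpNorm h 2 volume := by
    rw [← eLpNorm_congr_ae key, ← eLpNorm_congr_ae h2.coeFn_toLp]
    have := Lp.norm_fourier_eq g
    rw [Lp.norm_def, Lp.norm_def] at this
    exact (ENNReal.toReal_eq_toReal_iff' (Lp.eLpNorm_ne_top _) (Lp.eLpNorm_ne_top _)).1 this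
  have n2 := congrArg (fun t => t ^ (2:ℝ)) n1
  have := fun f : V → ℂ => eLpNorm_nnreal_pow_eq_lintegral (p := 2) (μ := volume) (f := f) two_ne_zero
  simp only [NNReal.coe_ofNat, ENNReal.coe_ofNat, ENNReal.rpow_ofNat] at this n2
  rw [this, this] at n2
  exact n2

/-- the character -/
def chr (x ξ : R3) : ℂ := Complex.exp (2 * Real.pi * Complex.I * dotR x ξ)

abbrev E3 := EuclideanSpace ℝ (Fin 3)

lemma inner_E (x ξ : R3) : inner ℝ (WithLp.toLp 2 x : E3) (WithLp.toLp 2 ξ) = dotR x ξ := by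
  simp [PiLp.inner_apply, Fin.sum_univ_three, dotR]; ring

lemma fourierInv_E (h : R3 → ℂ) (x : R3) :
    ∫ ξ, h ξ * chr x ξ = 𝓕⁻ (fun v : E3 => h (WithLp.ofLp v)) (WithLp.toLp 2 x) := by
  rw [Real.fourierInv_eq', ← (PiLp.volume_preserving_toLp (Fin 3)).integral_comp (MeasurableEquiv.toLp 2 (Fin 3 → ℝ)).measurableEmbedding]
  refine integral_congr_ae (Eventually.of_forall fun ξ => ?_)
  simp only [inner_E, chr, smul_eq_mul]
  rw [mul_comm]
  congr 2
  push_cast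
  simp only [dotR]
  push_cast; ring

lemma fourier_E (h : R3 → ℂ) (x : R3) :
    ∫ ξ, h ξ * chr (-x) ξ = 𝓕 (fun v : E3 => h (WithLp.ofLp v)) (WithLp.toLp 2 x) := by
  rw [fourierInv_E, Real.fourierInv_eq_fourier_neg]
  simp

lemma int_E {h : R3 → ℂ} (h1 : Integrable h) : Integrable (fun v : E3 => h (WithLp.ofLp v)) :=
  (PiLp.volume_preserving_ofLp (Fin 3)).integrable_comp_of_integrable h1

lemma plancherel {h : R3 → ℂ} (h1 : Integrable h) (h2 : MemLp h 2 volume) :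
    ∫⁻ x, (‖∫ ξ, h ξ * chr x ξ‖₊ : ℝ≥0∞) ^ 2 = ∫⁻ x, (‖h x‖₊ : ℝ≥0∞) ^ 2 := by
  have p := plancherel_aux (int_E h1) (h2.comp_measurePreserving (PiLp.volume_preserving_ofLp (Fin 3)))
  have q1 := (PiLp.volume_preserving_ofLp (Fin 3)).lintegral_comp_emb (MeasurableEquiv.toLp 2 (Fin 3 → ℝ)).symm.measurableEmbedding (fun x => (‖h x‖₊ : ℝ≥0∞) ^ 2)
  have q2 := (PiLp.volume_preserving_toLp (Fin 3)).lintegral_comp_emb (MeasurableEquiv.toLp 2 (Fin 3 → ℝ)).measurableEmbedding (fun x => (‖𝓕 (fun v : E3 => h (WithLp.ofLp v)) x‖₊ : ℝ≥0∞) ^ 2)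
  have q3 := (Measure.measurePreserving_neg (volume : Measure R3)).lintegral_comp_emb (MeasurableEquiv.neg R3).measurableEmbedding (fun x => (‖∫ ξ, h ξ * chr x ξ‖₊ : ℝ≥0∞) ^ 2)
  rw [← q3, ← q1]
  simp_rw [fourier_E]
  rw [q2]
  exact p

lemma inversion {h : R3 → ℂ} (hc : Continuous h) (h1 : Integrable h)
    (h2 : Integrable (fun ξ => ∫ x, h x * chr (-ξ) x)) (x : R3) :
    ∫ ξ, (∫ x, h x * chr (-ξ) x) * chr x ξ = h x := by
  have hc' : Continuous (fun v : E3 => h (WithLp.ofLp v)) := hc.comp (PiLp.continuous_ofLp 2 _)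
  simp_rw [fourier_E] at *
  have i2 : Integrable (𝓕 (fun v : E3 => h (WithLp.ofLp v))) := by
    have := int_E h2
    exact this
  have := congrFun (hc'.fourierInv_fourier_eq (int_E h1) i2) (WithLp.toLp 2 x)
  rw [fourierInv_E]
  exact this

end BC

namespace BC
open Filter Topology

lemma ker_xy (x y ξ : R3) : ker (xy x y) ξ = (Real.exp (-2 * Real.pi * dotR y ξ) : ℂ) * chr x ξ := by
  rw [ker, chr, dotC_xy, Complex.ofReal_exp, ← Complex.exp_add]
  congr 1
  push_cast
  linear_combination (2 * (Real.pi:ℂ) * dotR y ξ) * Complex.I_sq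

lemma LC.plancherel {f : R3 → ℂ} (hf : LC f) {y : R3} (hy : y ∈ Lambda3)
    (h2 : MemLp (fun ξ => f ξ * (Real.exp (-2 * Real.pi * dotR y ξ) : ℂ)) 2 volume) :
    ∫⁻ x, (‖Lap f (xy x y)‖₊ : ℝ≥0∞) ^ 2 =
      ∫⁻ ξ, (‖f ξ‖₊ : ℝ≥0∞) ^ 2 * ENNReal.ofReal (Real.exp (-4 * Real.pi * dotR y ξ)) := by
  have hc := continuous_dotR_right y
  have h1 : Integrable (fun ξ => f ξ * (Real.exp (-2 * Real.pi * dotR y ξ) : ℂ)) := by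
    refine (hf.int y hy).mono' (hf.meas.mul (Continuous.aestronglyMeasurable (by fun_prop))) ?_
    refine Eventually.of_forall fun ξ => ?_
    rw [norm_mul, Complex.norm_real, Real.norm_of_nonneg (Real.exp_pos _).le]
  have := BC.plancherel h1 h2
  have e : ∀ x, Lap f (xy x y) = ∫ ξ, f ξ * (Real.exp (-2 * Real.pi * dotR y ξ) : ℂ) * chr x ξ := by
    intro x
    unfold Lap
    simp_rw [ker_xy, mul_assoc]
  simp_rw [e]
  rw [this]
  refine lintegral_congr fun ξ => ?_
  rw [nnnorm_mul, ENNReal.coe_mul, mul_pow]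
  congr 1
  have : (‖(Real.exp (-2 * Real.pi * dotR y ξ) : ℂ)‖₊ : ℝ≥0∞) = ENNReal.ofReal (Real.exp (-2 * Real.pi * dotR y ξ)) := by
    rw [← enorm_eq_nnnorm, ← ofReal_norm, Complex.norm_real, Real.norm_of_nonneg (Real.exp_pos _).le]
  rw [this, ← ENNReal.ofReal_pow (Real.exp_pos _).le, ← Real.exp_nat_mul]
  congr 2; push_cast; ring

/-- nice functions: holomorphic with uniform polynomial decay -/
def Nice (F : C3 → ℂ) : Prop := DifferentiableOn ℂ F TLambda3 ∧
  ∃ M, ∀ x, ∀ y ∈ Lambda3, ‖F (xy x y)‖ ≤ M * (1 + ‖x‖) ^ (-4 : ℝ)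

lemma int_decay : Integrable (fun x : R3 => (1 + ‖x‖) ^ (-4 : ℝ)) :=
  integrable_one_add_norm (by simp; norm_num)

/-- a complex linear functional vanishing on real vectors vanishes -/
lemma clm_zero {A : C3 →L[ℂ] ℂ} (h : ∀ x : R3, A (xy x 0) = 0) : A = 0 := by
  rw [clm_eq_sum A]
  refine Finset.sum_eq_zero fun i _ => ?_
  have : (Pi.single i 1 : C3) = xy (Pi.single i 1) 0 := by
    ext j; by_cases hj : j = i
    · subst hj; simp [xy]
    · simp [xy, hj]
  have h0 : A (Pi.single i 1) = 0 := by rw [this, h]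
  simp only [h0]; exact zero_smul ℂ (ContinuousLinearMap.proj i : C3 →L[ℂ] ℂ)

lemma xy_add (x x' y y' : R3) : xy (x + x') (y + y') = xy x y + xy x' y' := by
  ext i; simp [xy]; ring

/-- the integral defining the density -/
def Phi (F : C3 → ℂ) (ξ : R3) (z : C3) : ℂ := ∫ x : R3, F (xy x 0 + z) * ker (-(xy x 0 + z)) ξ

lemma norm_ker_neg (z : C3) (ξ : R3) : ‖ker (-z) ξ‖ = Real.exp (2 * Real.pi * dotR (imv z) ξ) := by
  rw [norm_ker]; congr 1; simp [dotR, imv]; ring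

lemma cont_slice {F : C3 → ℂ} (hF : DifferentiableOn ℂ F TLambda3) {z : C3} (hz : z ∈ TLambda3) :
    Continuous (fun x : R3 => F (xy x 0 + z)) := by
  have h1 : Continuous (fun x : R3 => xy x 0 + z) := by unfold xy; fun_prop
  refine hF.continuousOn.comp_continuous h1 fun x => ?_
  have := xy_T (x := x + rev z) (y := 0 + imv z)
  rw [xy_add, xy_rev_imv] at this
  rw [this, zero_add]; exact hz

lemma slice_T {z : C3} (hz : z ∈ TLambda3) (x : R3) : xy x 0 + z ∈ TLambda3 := by
  have := xy_T (x := x + rev z) (y := 0 + imv z)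
  rw [xy_add, xy_rev_imv] at this
  rw [this, zero_add]; exact hz

lemma imv_slice (x : R3) (z : C3) : imv (xy x 0 + z) = imv z := by
  ext i; simp [imv, xy]

lemma nice_bound {F : C3 → ℂ} {M : ℝ} (hM : ∀ x, ∀ y ∈ Lambda3, ‖F (xy x y)‖ ≤ M * (1 + ‖x‖) ^ (-4 : ℝ))
    {z : C3} (hz : z ∈ TLambda3) (x : R3) : ‖F (xy x 0 + z)‖ ≤ M * (1 + ‖x + rev z‖) ^ (-4 : ℝ) := by
  have := hM (x + rev z) (imv z) hz
  have e := xy_add x (rev z) 0 (imv z)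
  rw [zero_add, xy_rev_imv] at e
  rwa [e] at this

lemma Phi_diff {F : C3 → ℂ} (hN : Nice F) (ξ : R3) {z0 : C3} (hz : z0 ∈ TLambda3) :
    DifferentiableAt ℂ (Phi F ξ) z0 := by
  obtain ⟨hF, M, hM⟩ := hN
  have hM0 : 0 ≤ M := by
    have := (norm_nonneg _).trans (hM 0 e0 e0_L)
    simpa using this
  have hcont : Continuous fun z : C3 => Real.exp (2 * Real.pi * dotR (imv z) ξ) := by
    have := continuous_imv; unfold dotR; fun_prop
  have hop : IsOpen (TLambda3 ∩ {z : C3 | Real.exp (2 * Real.pi * dotR (imv z) ξ) < Real.exp (2 * Real.pi * dotR (imv z0) ξ) + 1} ∩ Metric.ball z0 1) :=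
    (isOpen_T.inter (isOpen_lt hcont continuous_const)).inter Metric.isOpen_ball
  obtain ⟨r, hr, hb⟩ := Metric.isOpen_iff.1 hop z0 ⟨⟨hz, by simp⟩, Metric.mem_ball_self one_pos⟩
  set K := Real.exp (2 * Real.pi * dotR (imv z0) ξ) + 1 with hK
  have hK0 : 0 ≤ K := by positivity
  set a := 2 + ‖z0‖ with ha
  have ha1 : 1 ≤ a := by have := norm_nonneg z0; linarith
  have hrev : ∀ z ∈ Metric.ball z0 1, ‖rev z‖ ≤ a - 1 := by
    intro z hz
    have h1 : ‖z‖ ≤ a - 1 := by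
      have := norm_sub_norm_le z z0
      rw [mem_ball_iff_norm] at hz; linarith
    refine (pi_norm_le_iff_of_nonneg (by linarith)).2 fun i => ?_
    exact (Complex.abs_re_le_norm _).trans ((norm_le_pi_norm z i).trans h1)
  have hint : Integrable (fun x : R3 => M * (a ^ (4:ℝ) * (1 + ‖x‖) ^ (-4 : ℝ)) * K) :=
    ((int_decay.const_mul _).const_mul _).mul_const _
  refine (holo_param (μ := volume) (fun z x => F (xy x 0 + z) * ker (-(xy x 0 + z)) ξ) hr (z0 := z0) hint ?_ ?_ ?_).1.differentiableAt
  · intro z hzb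
    have hzT := (hb hzb).1.1
    refine ((cont_slice hF hzT).mul ?_).aestronglyMeasurable
    unfold ker dotC xy; fun_prop
  · intro x
    have haff : DifferentiableOn ℂ (fun z : C3 => xy x 0 + z) (Metric.ball z0 r) := by fun_prop
    refine (hF.comp haff fun z hzb => slice_T (hb hzb).1.1 x).mul ?_
    unfold ker dotC; fun_prop
  · intro x z hzb
    obtain ⟨⟨hzT, hzK⟩, hz1⟩ := hb hzb
    rw [norm_mul, norm_ker_neg, imv_slice]
    refine mul_le_mul ((nice_bound hM hzT x).trans ?_) hzK.le (Real.exp_pos _).le (by positivity)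
    refine mul_le_mul_of_nonneg_left ?_ hM0
    rw [Real.rpow_neg (by positivity), Real.rpow_neg (by positivity), ← div_eq_mul_inv,
      inv_eq_one_div, div_le_div_iff₀ (by positivity) (by positivity), one_mul,
      ← Real.mul_rpow (by positivity) (by positivity)]
    refine Real.rpow_le_rpow (by positivity) ?_ (by norm_num)
    have h1 := hrev z hz1
    have h2 : ‖x‖ ≤ ‖x + rev z‖ + ‖rev z‖ := by
      have := norm_sub_le (x + rev z) (rev z); simpa using this
    nlinarith [norm_nonneg (x + rev z)]

lemma Phi_trans (F : C3 → ℂ) (ξ : R3) (z : C3) (t : R3) : Phi F ξ (z + xy t 0) = Phi F ξ z := by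
  unfold Phi
  have := integral_add_right_eq_self (μ := (volume : Measure R3)) (fun x : R3 => F (xy x 0 + z) * ker (-(xy x 0 + z)) ξ) t
  rw [← this]
  refine integral_congr_ae (Eventually.of_forall fun x => ?_)
  have e : xy x 0 + (z + xy t 0) = xy (x + t) 0 + z := by
    ext i; simp [xy]; ring
  simp only [e]

lemma Phi_const {F : C3 → ℂ} (hN : Nice F) (ξ : R3) {z w : C3} (hz : z ∈ TLambda3) (hw : w ∈ TLambda3) :
    Phi F ξ z = Phi F ξ w := by
  have hd : DifferentiableOn ℂ (Phi F ξ) TLambda3 := fun z hz => (Phi_diff hN ξ hz).differentiableWithinAt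
  refine isOpen_T.is_const_of_fderiv_eq_zero convex_T.isPreconnected hd ?_ hz hw
  intro z hz
  refine clm_zero fun x => ?_
  have hf := (Phi_diff hN ξ hz).hasFDerivAt
  have h1 : HasDerivAt (fun s : ℝ => z + (s : ℂ) • xy x 0) (xy x 0) 0 := by
    have := ((Complex.ofRealCLM.hasDerivAt (x := (0:ℝ))).smul_const (xy x 0)).const_add z
    simpa using this
  have hf' : HasFDerivAt (Phi F ξ) ((fderiv ℂ (Phi F ξ) z).restrictScalars ℝ) (z + ((0:ℝ) : ℂ) • xy x 0) := by
    simpa using hf.restrictScalars ℝ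
  have h2 := hf'.comp_hasDerivAt (0:ℝ) h1
  have h3 : (Phi F ξ ∘ fun s : ℝ => z + (s : ℂ) • xy x 0) = fun _ => Phi F ξ z := by
    ext s
    have : (s : ℂ) • xy x 0 = xy (s • x) 0 := by ext i; simp [xy]
    simp only [Function.comp, this, Phi_trans]
  rw [h3] at h2
  exact h2.unique (hasDerivAt_const _ _)

lemma chr_symm (x ξ : R3) : chr x ξ = chr ξ x := by
  unfold chr; congr 3; unfold dotR; ring

lemma norm_chr (x ξ : R3) : ‖chr x ξ‖ = 1 := by
  unfold chr
  rw [show (2 * Real.pi * Complex.I * dotR x ξ : ℂ) = ((2 * Real.pi * dotR x ξ : ℝ) : ℂ) * Complex.I by push_cast; ring]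
  exact Complex.norm_exp_ofReal_mul_I _

lemma Phi_slice (F : C3 → ℂ) (ξ y : R3) :
    Phi F ξ (xy 0 y) = (Real.exp (2 * Real.pi * dotR y ξ) : ℂ) * ∫ x, F (xy x y) * chr (-ξ) x := by
  unfold Phi
  rw [← integral_const_mul]
  refine integral_congr_ae (Eventually.of_forall fun x => ?_)
  have e : xy x 0 + xy 0 y = xy x y := by rw [← xy_add]; simp
  have e2 : -xy x y = xy (-x) (-y) := by ext i; simp [xy]; ring
  have e3 : chr (-x) ξ = chr (-ξ) x := by
    unfold chr; congr 3; simp only [dotR, Pi.neg_apply]; ring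
  have e4 : -2 * Real.pi * dotR (-y) ξ = 2 * Real.pi * dotR y ξ := by
    simp only [dotR, Pi.neg_apply]; ring
  simp only [e, e2, ker_xy, e3, e4]
  ring

lemma LC_of_bdd {f : R3 → ℂ} (hm : AEStronglyMeasurable f volume) (hs : ∀ ξ, ξ ∉ Cc → f ξ = 0)
    {M : ℝ} (hM : ∀ ξ, ‖f ξ‖ ≤ M) : LC f := by
  refine ⟨hm, hs, fun y hy => ?_⟩
  obtain ⟨δ, hδ, hb⟩ := dual_lower hy
  have hc := continuous_dotR_right y
  have hM0 : 0 ≤ M := (norm_nonneg _).trans (hM 0)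
  refine ((integrable_exp_norm (a := 2 * Real.pi * δ) (by positivity)).const_mul M).mono'
    (hm.norm.mul (Continuous.aestronglyMeasurable (by fun_prop))) ?_
  refine Eventually.of_forall fun ξ => ?_
  by_cases hξ : ξ ∈ Cc
  · rw [Real.norm_of_nonneg (by positivity)]
    refine mul_le_mul (hM ξ) (Real.exp_le_exp.2 ?_) (Real.exp_pos _).le hM0
    have := hb ξ hξ
    nlinarith [Real.pi_pos]
  · simp [hs ξ hξ]; positivity

theorem paley_wiener {F : C3 → ℂ} (hN : Nice F) :
    ∃ f, LC f ∧ EqOn F (Lap f) TLambda3 ∧ ∃ M, ∀ ξ, ‖f ξ‖ ≤ M := by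
  have hN' := hN
  obtain ⟨hF, M, hM⟩ := hN'
  set J := ∫ x : R3, M * (1 + ‖x‖) ^ (-4 : ℝ) with hJ
  have hsc : ∀ y ∈ Lambda3, Continuous (fun x => F (xy x y)) := by
    intro y hy
    have := cont_slice hF (z := xy 0 y) (xy_T.2 hy)
    have e : ∀ x, xy x 0 + xy 0 y = xy x y := fun x => by rw [← xy_add]; simp
    simpa only [e] using this
  have hsi : ∀ y ∈ Lambda3, Integrable (fun x => F (xy x y)) := by
    intro y hy
    exact (int_decay.const_mul M).mono' (hsc y hy).aestronglyMeasurable (Eventually.of_forall fun x => hM x y hy)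
  set f : R3 → ℂ := fun ξ => Phi F ξ (xy 0 e0) with hf
  have hfy : ∀ y ∈ Lambda3, ∀ ξ, f ξ = (Real.exp (2 * Real.pi * dotR y ξ) : ℂ) * ∫ x, F (xy x y) * chr (-ξ) x := by
    intro y hy ξ
    rw [← Phi_slice]
    exact Phi_const hN ξ (xy_T.2 e0_L) (xy_T.2 hy)
  have hbd : ∀ y ∈ Lambda3, ∀ ξ, ‖f ξ‖ ≤ J * Real.exp (2 * Real.pi * dotR y ξ) := by
    intro y hy ξ
    rw [hfy y hy ξ, norm_mul, Complex.norm_real, Real.norm_of_nonneg (Real.exp_pos _).le, mul_comm]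
    gcongr
    refine norm_integral_le_of_norm_le (int_decay.const_mul M) (Eventually.of_forall fun x => ?_)
    rw [norm_mul, norm_chr, mul_one]
    exact hM x y hy
  have hsm : ∀ (c : ℝ) (y ξ : R3), dotR (c • y) ξ = c * dotR y ξ := by
    intro c y ξ; simp [dotR]; ring
  have hb0 : ∀ ξ, ‖f ξ‖ ≤ J := by
    intro ξ
    have hc : Continuous fun t : ℝ => J * Real.exp (2 * Real.pi * dotR (t • e0) ξ) := by
      simp only [hsm]; fun_prop
    have ht : Tendsto (fun t : ℝ => J * Real.exp (2 * Real.pi * dotR (t • e0) ξ)) (𝓝[>] 0) (𝓝 J) := by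
      have := hc.tendsto 0
      simp only [hsm, zero_mul, mul_zero, Real.exp_zero, mul_one] at this
      simp only [hsm]
      exact this.mono_left nhdsWithin_le_nhds
    refine ge_of_tendsto ht ?_
    filter_upwards [self_mem_nhdsWithin] with t ht
    exact hbd _ (smul_L ht e0_L) ξ
  have hsupp : ∀ ξ, ξ ∉ Cc → f ξ = 0 := by
    intro ξ hξ
    simp only [Cc, mem_ofPred_eq, not_forall, not_le] at hξ
    obtain ⟨y, hy, hneg⟩ := hξ
    have ht : Tendsto (fun t : ℝ => J * Real.exp (2 * Real.pi * dotR (t • y) ξ)) atTop (𝓝 (J * 0)) := by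
      refine Tendsto.const_mul _ (Real.tendsto_exp_atBot.comp ?_)
      have : ∀ t : ℝ, 2 * Real.pi * dotR (t • y) ξ = (2 * Real.pi * dotR y ξ) * t := by
        intro t; rw [hsm]; ring
      simp only [this]
      exact tendsto_id.const_mul_atTop_of_neg (by nlinarith [Real.pi_pos])
    rw [mul_zero] at ht
    have : ‖f ξ‖ ≤ 0 := by
      refine ge_of_tendsto ht ?_
      filter_upwards [eventually_gt_atTop 0] with t ht
      exact hbd _ (smul_L ht hy) ξ
    simpa using this
  have hmeas : AEStronglyMeasurable f volume := by
    have e : f = fun ξ => (Real.exp (2 * Real.pi * dotR e0 ξ) : ℂ) * ∫ x, F (xy x e0) * chr (-ξ) x :=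
      funext fun ξ => hfy e0 e0_L ξ
    rw [e]
    have hc := continuous_dotR_right e0
    refine (Continuous.aestronglyMeasurable (by fun_prop)).mul ?_
    have hj : Continuous (Function.uncurry fun (ξ x : R3) => F (xy x e0) * chr (-ξ) x) := by
      have := hsc e0 e0_L
      refine (this.comp continuous_snd).mul ?_
      unfold chr dotR; simp only [Pi.neg_apply]; fun_prop
    exact (hj.stronglyMeasurable.integral_prod_right (ν := volume)).aestronglyMeasurable
  have hLC := LC_of_bdd hmeas hsupp hb0
  refine ⟨f, hLC, ?_, J, hb0⟩
  intro z hz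
  have hslice : ∀ ξ, ∫ x, F (xy x (imv z)) * chr (-ξ) x = f ξ * (Real.exp (-2 * Real.pi * dotR (imv z) ξ) : ℂ) := by
    intro ξ
    rw [hfy (imv z) hz ξ, mul_right_comm, ← Complex.ofReal_mul, ← Real.exp_add]
    have : 2 * Real.pi * dotR (imv z) ξ + -2 * Real.pi * dotR (imv z) ξ = 0 := by ring
    rw [this]; simp
  have hi : Integrable (fun ξ => ∫ x, F (xy x (imv z)) * chr (-ξ) x) := by
    simp only [hslice]
    have hc := continuous_dotR_right (imv z)
    refine (hLC.int (imv z) hz).mono' (hmeas.mul (Continuous.aestronglyMeasurable (by fun_prop))) ?_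
    refine Eventually.of_forall fun ξ => ?_
    rw [norm_mul, Complex.norm_real, Real.norm_of_nonneg (Real.exp_pos _).le]
  have := inversion (hsc (imv z) hz) (hsi (imv z) hz) hi (rev z)
  simp only [hslice] at this
  rw [xy_rev_imv] at this
  rw [← this]
  unfold Lap
  refine integral_congr_ae (Eventually.of_forall fun ξ => ?_)
  have := ker_xy (rev z) (imv z) ξ
  rw [xy_rev_imv] at this
  simp only [this, mul_assoc]

end BC

namespace BC
open Filter Topology

/-- gamma-type integral -/
def GI (p : ℝ) (ξ : R3) : ℝ≥0∞ :=
  ∫⁻ y in Lambda3, ENNReal.ofReal (Real.exp (-4 * Real.pi * dotR y ξ)) * ENNReal.ofReal (DeltaL y ^ p)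

/-- matrix in the light cone coordinates -/
def MA (a c d : ℝ) : Matrix (Fin 3) (Fin 3) ℝ :=
  !![(1/a + c^2/(a*d^2) + a/d^2)/2, (1/a - c^2/(a*d^2) - a/d^2)/2, -(c/(a*d));
     (1/a + c^2/(a*d^2) - a/d^2)/2, (1/a - c^2/(a*d^2) + a/d^2)/2, -(c/(a*d));
     -(c/d^2), c/d^2, 1/d]

lemma det_MA {a c d : ℝ} (ha : a ≠ 0) (hd : d ≠ 0) : (MA a c d).det = (d^3)⁻¹ := by
  rw [Matrix.det_fin_three]
  simp [MA]
  field_simp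
  ring

lemma MA_mulVec (a c d : ℝ) (y : R3) : (Matrix.toLin' (MA a c d)) y =
    ![(1/a + c^2/(a*d^2) + a/d^2)/2 * y 0 + (1/a - c^2/(a*d^2) - a/d^2)/2 * y 1 -(c/(a*d)) * y 2,
     (1/a + c^2/(a*d^2) - a/d^2)/2 * y 0 + (1/a - c^2/(a*d^2) + a/d^2)/2 * y 1 -(c/(a*d)) * y 2,
     -(c/d^2) * y 0 + c/d^2 * y 1 + 1/d * y 2] := by
  rw [Matrix.toLin'_apply]
  ext i
  fin_cases i <;> simp [MA, Matrix.mulVec, dotProduct, Fin.sum_univ_three] <;> ring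

lemma MA_delta {a c d : ℝ} (ha : a ≠ 0) (hd : d ≠ 0) (y : R3) :
    DeltaL (Matrix.toLin' (MA a c d) y) = DeltaL y / d^2 := by
  rw [MA_mulVec]
  simp only [DeltaL, Matrix.cons_val_zero, Matrix.cons_val_one, Matrix.cons_val]
  field_simp
  ring

lemma MA_mem {a c d : ℝ} (ha : 0 < a) (hd : 0 < d) (y : R3) :
    Matrix.toLin' (MA a c d) y ∈ Lambda3 ↔ y ∈ Lambda3 := by
  have h1 := MA_delta (c := c) ha.ne' hd.ne' y
  have hv : (Matrix.toLin' (MA a c d) y) 0 - (Matrix.toLin' (MA a c d) y) 1 = a / d^2 * (y 0 - y 1) := by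
    rw [MA_mulVec]; simp; ring
  have key : ∀ w : R3, w ∈ Lambda3 ↔ 0 < w 0 - w 1 ∧ 0 < DeltaL w := by
    intro w
    constructor
    · rintro ⟨h1, h2⟩
      refine ⟨?_, h2⟩
      by_contra h; push Not at h; nlinarith [sq_nonneg (w 2)]
    · rintro ⟨h1, h2⟩
      refine ⟨?_, h2⟩
      unfold DeltaL at h2
      by_contra h; push Not at h; nlinarith [sq_nonneg (w 2)]
  rw [key, key, h1, hv]
  rw [mul_pos_iff_of_pos_left (by positivity), div_pos_iff_of_pos_right (by positivity)]

lemma GI_eq (p : ℝ) {ξ : R3} (hξ : ξ ∈ Lambda3) :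
    GI p ξ = ENNReal.ofReal (DeltaL ξ ^ (-(3/2) - p)) * GI p e0 := by
  set d := Real.sqrt (DeltaL ξ) with hd
  have hD := delta_pos hξ
  have hd0 : 0 < d := Real.sqrt_pos.2 hD
  have hd2 : d ^ 2 = DeltaL ξ := Real.sq_sqrt hD.le
  set a := ξ 0 + ξ 1 with ha
  have ha0 : 0 < a := hξ.1
  set A := Matrix.toLin' (MA a (ξ 2) d) with hA
  have hdet := det_MA (c := ξ 2) ha0.ne' hd0.ne'
  have hmap := Real.map_matrix_volume_pi_eq_smul_volume_pi (M := MA a (ξ 2) d) (by rw [hdet]; positivity)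
  have hdot : ∀ y, dotR (A y) ξ = y 0 := by
    intro y
    rw [hA, MA_mulVec]
    simp only [dotR, Matrix.cons_val_zero, Matrix.cons_val_one, Matrix.cons_val]
    have hb : ξ 0 - ξ 1 = (d^2 + ξ 2 ^2)/a := by
      rw [eq_div_iff ha0.ne', hd2, ha]; unfold DeltaL; ring
    have h0 : ξ 0 = (a + (d^2 + ξ 2 ^2)/a)/2 := by rw [← hb, ha]; ring
    have h1 : ξ 1 = (a - (d^2 + ξ 2 ^2)/a)/2 := by rw [← hb, ha]; ring
    rw [h0, h1]
    field_simp
    ring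
  set φ : R3 → ℝ≥0∞ := Lambda3.indicator (fun y => ENNReal.ofReal (Real.exp (-4 * Real.pi * dotR y ξ)) * ENNReal.ofReal (DeltaL y ^ p)) with hφ
  have hφm : Measurable φ := by
    refine Measurable.indicator ?_ measurable_L
    unfold dotR DeltaL; fun_prop
  have h1 : ∫⁻ y, φ y ∂(Measure.map A volume) = ENNReal.ofReal (d^3) * GI p ξ := by
    rw [hmap, lintegral_smul_measure, hdet, hφ, lintegral_indicator measurable_L]
    simp only [inv_inv, abs_of_pos (pow_pos hd0 3)]
    rfl
  have hAm : Measurable A := (LinearMap.continuous_of_finiteDimensional A).measurable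
  have h2 : ∫⁻ y, φ y ∂(Measure.map A volume) = ENNReal.ofReal (d^2) ^ (-p) * GI p e0 := by
    rw [lintegral_map hφm hAm]
    have : ∀ y, φ (A y) = ENNReal.ofReal (d^2) ^ (-p) * Lambda3.indicator (fun y => ENNReal.ofReal (Real.exp (-4 * Real.pi * dotR y e0)) * ENNReal.ofReal (DeltaL y ^ p)) y := by
      intro y
      by_cases hy : y ∈ Lambda3
      · have hy' : A y ∈ Lambda3 := (MA_mem ha0 hd0 y).2 hy
        rw [hφ, indicator_of_mem hy', indicator_of_mem hy, hdot, hA, MA_delta ha0.ne' hd0.ne']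
        have : dotR y e0 = y 0 := by simp [dotR, e0]
        rw [this, ENNReal.ofReal_rpow_of_pos (by positivity), mul_left_comm]
        have hDy := Real.rpow_nonneg (delta_pos hy).le p
        congr 1
        rw [← ENNReal.ofReal_mul (by positivity)]
        congr 1
        rw [Real.div_rpow (delta_pos hy).le (by positivity), Real.rpow_neg (by positivity)]
        field_simp
      · have hy' : A y ∉ Lambda3 := fun h => hy ((MA_mem ha0 hd0 y).1 h)
        rw [hφ, indicator_of_notMem hy', indicator_of_notMem hy]; simp
    simp_rw [this]
    rw [lintegral_const_mul, lintegral_indicator measurable_L]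
    · rfl
    · refine Measurable.indicator ?_ measurable_L
      unfold dotR DeltaL; fun_prop
  rw [h1] at h2
  have h3 : ENNReal.ofReal (DeltaL ξ ^ (-(3/2) - p)) * ENNReal.ofReal (d^3) = ENNReal.ofReal (d^2) ^ (-p) := by
    rw [ENNReal.ofReal_rpow_of_pos (by positivity), ← ENNReal.ofReal_mul (by positivity)]
    congr 1
    rw [← hd2, ← Real.rpow_natCast d 2, ← Real.rpow_mul hd0.le, ← Real.rpow_mul hd0.le, ← Real.rpow_natCast d 3, ← Real.rpow_add hd0]
    congr 1; push_cast; ring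
  have hne : ENNReal.ofReal (d^3) ≠ 0 := by simp; positivity
  rw [← ENNReal.mul_right_inj hne ENNReal.ofReal_ne_top, h2, ← h3]
  ring

lemma L_norm {y : R3} (hy : y ∈ Lambda3) : ‖y‖ ≤ y 0 := by
  rw [mem_L] at hy
  refine (pi_norm_le_iff_of_nonneg hy.1.le).2 fun i => ?_
  fin_cases i
  · simp [abs_of_pos hy.1]
  · exact abs_le_of_sq_le_sq (by simp; nlinarith [sq_nonneg (y 2)]) hy.1.le
  · exact abs_le_of_sq_le_sq (by simp; nlinarith [sq_nonneg (y 1)]) hy.1.le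

/-- the constant -/
def Gam (m : ℕ) : ℝ≥0∞ := GI (2 * m - 3/2) e0

lemma Gam_lt_top (m : ℕ) (hm : 1 ≤ m) : Gam m < ⊤ := by
  have hm' : (1:ℝ) ≤ m := by exact_mod_cast hm
  set K : ℝ := 1 + (4*m).factorial with hK
  have hK0 : 0 ≤ K := by positivity
  have hb : ∀ y ∈ Lambda3, ENNReal.ofReal (Real.exp (-4 * Real.pi * dotR y e0)) * ENNReal.ofReal (DeltaL y ^ ((2 * m - 3/2 : ℝ))) ≤ ENNReal.ofReal (K * Real.exp (-1 * ‖y‖)) := by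
    intro y hy
    rw [← ENNReal.ofReal_mul (by positivity)]
    refine ENNReal.ofReal_le_ofReal ?_
    have hy0 : 0 < y 0 := (mem_L.1 hy).1
    have hn := L_norm hy
    have : dotR y e0 = y 0 := by simp [dotR, e0]
    rw [this]
    have hD := delta_pos hy
    have hDle : DeltaL y ≤ y 0 ^ 2 := by unfold DeltaL; nlinarith [sq_nonneg (y 1), sq_nonneg (y 2)]
    have h1 : DeltaL y ^ ((2 * m - 3/2 : ℝ)) ≤ 1 + y 0 ^ (4 * m) := by
      rcases le_total (DeltaL y) 1 with h | h
      · have := Real.rpow_le_one hD.le h (z := (2 * m - 3/2 : ℝ)) (by linarith)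
        have : 0 ≤ y 0 ^ (4*m) := by positivity
        linarith
      · have h2 := Real.rpow_le_rpow_of_exponent_le h (show (2 * m - 3/2 : ℝ) ≤ ((2 * m : ℕ) : ℝ) by push_cast; linarith)
        rw [Real.rpow_natCast] at h2
        have h3 : DeltaL y ^ (2*m) ≤ (y 0 ^ 2) ^ (2*m) := by gcongr
        rw [← pow_mul, show 2 * (2 * m) = 4 * m by ring] at h3
        linarith
    have h2 := Real.pow_div_factorial_le_exp (y 0) hy0.le (4*m)
    rw [div_le_iff₀ (by positivity)] at h2
    have h3 : (1:ℝ) ≤ Real.exp (y 0) := Real.one_le_exp hy0.le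
    have h4 : DeltaL y ^ ((2 * m - 3/2 : ℝ)) ≤ K * Real.exp (y 0) := by rw [hK]; linarith
    calc _ ≤ Real.exp (-4 * Real.pi * y 0) * (K * Real.exp (y 0)) := by gcongr
      _ = K * Real.exp (-4 * Real.pi * y 0 + y 0) := by rw [Real.exp_add]; ring
      _ ≤ _ := by
        gcongr
        nlinarith [Real.pi_gt_three]
  have : Gam m ≤ ∫⁻ y : R3, ENNReal.ofReal (K * Real.exp (-1 * ‖y‖)) := by
    refine (setLIntegral_mono' measurable_L hb).trans (setLIntegral_le_lintegral _ _)
  exact this.trans_lt ((integrable_exp_norm one_pos).const_mul K).lintegral_lt_top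

lemma Gam_pos (m : ℕ) : 0 < Gam m := by
  unfold Gam GI
  rw [setLIntegral_pos_iff (by unfold dotR DeltaL; fun_prop)]
  refine (isOpen_L.measure_pos volume ⟨e0, e0_L⟩).trans_le (measure_mono fun y hy => ⟨?_, hy⟩)
  have := Real.rpow_pos_of_pos (delta_pos hy) (2 * m - 3/2)
  simp only [Function.mem_support, ne_eq, mul_eq_zero, ENNReal.ofReal_eq_zero, not_or, not_le]
  exact ⟨Real.exp_pos _, this⟩

lemma LC.setL {g : R3 → ℂ} (hg : LC g) (φ : R3 → ℝ≥0∞) :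
    ∫⁻ ξ, (‖g ξ‖₊ : ℝ≥0∞) ^ 2 * φ ξ = ∫⁻ ξ in Lambda3, (‖g ξ‖₊ : ℝ≥0∞) ^ 2 * φ ξ := by
  rw [← lintegral_indicator measurable_L]
  refine lintegral_congr_ae ?_
  have : ∀ᵐ ξ : R3, ξ ∉ Cc \ Lambda3 := measure_eq_zero_iff_ae_notMem.1 Cc_diff_null
  filter_upwards [this] with ξ hξ
  by_cases h : ξ ∈ Lambda3
  · rw [indicator_of_mem h]
  · rw [indicator_of_notMem h, hg.supp ξ (fun h' => hξ ⟨h', h⟩)]; simp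

lemma berg_Lap (m : ℕ) (hm : 1 ≤ m) {g : R3 → ℂ} (hg : LC g)
    (h2 : ∀ y ∈ Lambda3, MemLp (fun ξ => g ξ * (Real.exp (-2 * Real.pi * dotR y ξ) : ℂ)) 2 volume) :
    bergNormSqTube (2 * m) (Lap g) =
      Gam m * ∫⁻ ξ in Lambda3, (‖g ξ‖₊ : ℝ≥0∞) ^ 2 * ENNReal.ofReal (DeltaL ξ ^ (-(2 * m : ℝ))) := by
  unfold bergNormSqTube
  have e1 : ∀ y ∈ Lambda3, (∫⁻ x : Fin 3 → ℝ, (‖Lap g (fun i => (x i : ℂ) + (y i : ℂ) * Complex.I)‖₊ : ℝ≥0∞) ^ 2)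
      * ENNReal.ofReal (DeltaL y ^ ((2 * m : ℝ) - 3 / 2)) =
      ∫⁻ ξ in Lambda3, (‖g ξ‖₊ : ℝ≥0∞) ^ 2 * ENNReal.ofReal (Real.exp (-4 * Real.pi * dotR y ξ)) * ENNReal.ofReal (DeltaL y ^ ((2 * m : ℝ) - 3 / 2)) := by
    intro y hy
    have := hg.plancherel hy (h2 y hy)
    unfold xy at this
    rw [this, hg.setL, lintegral_mul_const' _ _ ENNReal.ofReal_ne_top]
  rw [setLIntegral_congr_fun measurable_L e1, lintegral_lintegral_swap]
  · rw [← lintegral_const_mul' _ _ (Gam_lt_top m hm).ne]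
    refine setLIntegral_congr_fun measurable_L fun ξ hξ => ?_
    have := GI_eq (2 * m - 3/2) hξ
    unfold Gam
    have e : (-(3/2) - (2 * m - 3/2) : ℝ) = -(2*m) := by ring
    rw [e] at this
    rw [mul_left_comm, mul_comm (GI _ _), ← this]
    unfold GI
    rw [← lintegral_const_mul' _ _ (by simp)]
    simp only [mul_assoc]
  · have := hg.meas.restrict (s := Lambda3)
    have hg2 : AEMeasurable (fun z : R3 × R3 => (‖g z.2‖₊ : ℝ≥0∞) ^ 2) ((volume.restrict Lambda3).prod (volume.restrict Lambda3)) := by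
      have := this.comp_snd (μ := volume.restrict Lambda3)
      exact (this.enorm.pow_const 2)
    refine (hg2.mul (Measurable.aemeasurable ?_)).mul (Measurable.aemeasurable ?_)
    · unfold dotR; fun_prop
    · unfold DeltaL; fun_prop

end BC

namespace BC
open Filter Topology

lemma circle_sub {g : ℂ → ℂ} (hg : DiffContOnCl ℂ g (Metric.ball 0 1)) :
    ENNReal.ofReal (2 * Real.pi) * (‖g 0‖₊ : ℝ≥0∞) ^ 2 ≤ ∫⁻ θ in Ioc 0 (2 * Real.pi), (‖g (circleMap 0 1 θ)‖₊ : ℝ≥0∞) ^ 2 := by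
  have h2 : DiffContOnCl ℂ (fun w => g w * g w) (Metric.ball 0 |1|) := by
    rw [abs_one]; exact hg.smul hg
  have := h2.circleAverage
  rw [Real.circleAverage_def, intervalIntegral.integral_of_le (by positivity)] at this
  have h3 : ((2 * Real.pi : ℝ) : ℂ) * (g 0 * g 0) = ∫ θ in Ioc 0 (2 * Real.pi), g (circleMap 0 1 θ) * g (circleMap 0 1 θ) := by
    rw [← this, Complex.real_smul, ← mul_assoc, ← Complex.ofReal_mul, mul_inv_cancel₀ (by positivity)]; simp
  have h4 := enorm_integral_le_lintegral_enorm (μ := volume.restrict (Ioc 0 (2 * Real.pi))) (fun θ => g (circleMap 0 1 θ) * g (circleMap 0 1 θ))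
  rw [← h3, enorm_mul, enorm_mul] at h4
  have h5 : ‖((2 * Real.pi : ℝ) : ℂ)‖ₑ = ENNReal.ofReal (2 * Real.pi) := by
    rw [← ofReal_norm, Complex.norm_real, Real.norm_of_nonneg (by positivity)]
  rw [h5] at h4
  simp only [enorm_mul, ← sq] at h4
  refine h4.trans (le_of_eq (lintegral_congr fun θ => ?_))
  rw [enorm_pow]; rfl

lemma mp_rot (θ : ℝ) : MeasurePreserving (fun w : C3 => (circleMap 0 1 θ) • w) volume volume := by
  have h1 : ∀ i : Fin 3, MeasurePreserving (fun w : ℂ => circleMap 0 1 θ * w) volume volume := by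
    intro i
    have := (rotation (Circle.exp θ)).measurePreserving
    have e : (fun w : ℂ => circleMap 0 1 θ * w) = ⇑(rotation (Circle.exp θ)) := by
      ext w; simp [circleMap]
    rw [e]; exact this
  exact volume_preserving_pi h1

lemma sub_mean {F : C3 → ℂ} {z0 : C3} {R : ℝ} (hF : DifferentiableOn ℂ F (Metric.ball z0 R)) :
    volume (Metric.ball (0:C3) R) * (‖F z0‖₊ : ℝ≥0∞) ^ 2 ≤ ∫⁻ w in Metric.ball z0 R, (‖F w‖₊ : ℝ≥0∞) ^ 2 := by
  set u : C3 → ℝ≥0∞ := (Metric.ball z0 R).indicator (fun w => (‖F w‖₊ : ℝ≥0∞) ^ 2) with hu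
  have hum : Measurable u := by
    have hc : ContinuousOn (fun w => (‖F w‖₊ : ℝ≥0∞) ^ 2) (Metric.ball z0 R) := by
      have := hF.continuousOn
      have h1 : Continuous fun t : ℂ => (‖t‖₊ : ℝ≥0∞) ^ 2 := by fun_prop
      exact h1.comp_continuousOn this
    classical
    have := hc.measurable_piecewise (g := fun _ => (0:ℝ≥0∞)) continuousOn_const measurableSet_ball
    convert this using 1
    rw [hu]
    exact (piecewise_eq_indicator).symm
  have h1 : ∀ w ∈ Metric.ball (0:C3) R, ENNReal.ofReal (2 * Real.pi) * (‖F z0‖₊ : ℝ≥0∞) ^ 2 ≤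
      ∫⁻ θ in Ioc 0 (2 * Real.pi), u (z0 + (circleMap 0 1 θ) • w) := by
    intro w hw
    rw [mem_ball_zero_iff] at hw
    have hmem : ∀ ζ : ℂ, ‖ζ‖ ≤ 1 → z0 + ζ • w ∈ Metric.ball z0 R := by
      intro ζ hζ
      rw [mem_ball_iff_norm, add_sub_cancel_left, norm_smul]
      nlinarith [norm_nonneg w, norm_nonneg ζ]
    have hd : DifferentiableOn ℂ (fun ζ : ℂ => F (z0 + ζ • w)) (Metric.closedBall 0 1) := by
      refine hF.comp (by fun_prop) fun ζ hζ => hmem ζ (by simpa using hζ)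
    have := circle_sub (g := fun ζ : ℂ => F (z0 + ζ • w)) (by
      refine DifferentiableOn.diffContOnCl ?_
      rwa [closure_ball _ one_ne_zero])
    simp only [zero_smul, add_zero] at this
    refine this.trans (le_of_eq (lintegral_congr fun θ => ?_))
    rw [hu, indicator_of_mem (hmem _ (by simp [circleMap]))]
  have h2 : ∫⁻ w in Metric.ball (0:C3) R, ENNReal.ofReal (2 * Real.pi) * (‖F z0‖₊ : ℝ≥0∞) ^ 2 ≤
      ∫⁻ w, ∫⁻ θ in Ioc 0 (2 * Real.pi), u (z0 + (circleMap 0 1 θ) • w) :=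
    (setLIntegral_mono' measurableSet_ball h1).trans (setLIntegral_le_lintegral _ _)
  rw [lintegral_lintegral_swap] at h2
  · have h3 : ∀ θ : ℝ, ∫⁻ w, u (z0 + (circleMap 0 1 θ) • w) = ∫⁻ w in Metric.ball z0 R, (‖F w‖₊ : ℝ≥0∞) ^ 2 := by
      intro θ
      have e1 := (mp_rot θ).lintegral_comp (f := fun w => u (z0 + w)) (hum.comp (measurable_const_add z0))
      rw [e1, lintegral_add_left_eq_self u z0, hu, lintegral_indicator measurableSet_ball]
    simp only [h3, lintegral_const, Measure.restrict_apply MeasurableSet.univ, univ_inter, Real.volume_Ioc, sub_zero] at h2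
    rw [mul_comm (∫⁻ _, _ ∂_), mul_assoc, ENNReal.mul_le_mul_iff_right (by simp [Real.pi_pos]) ENNReal.ofReal_ne_top, mul_comm] at h2
    exact h2
  · refine Measurable.aemeasurable (hum.comp ?_)
    unfold circleMap
    refine Continuous.measurable ?_
    fun_prop

lemma mp_xy : MeasurePreserving (fun p : R3 × R3 => xy p.1 p.2) (volume.prod volume) volume := by
  have h1 := (volume_measurePreserving_arrowProdEquivProdArrow ℝ ℝ (Fin 3)).symm
  have h2 : MeasurePreserving (fun (f : Fin 3 → ℝ × ℝ) (i : Fin 3) => Complex.measurableEquivRealProd.symm (f i)) volume volume :=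
    volume_preserving_pi (fun i => Complex.volume_preserving_equiv_real_prod.symm)
  have := h2.comp h1
  have e : (fun p : R3 × R3 => xy p.1 p.2) = (fun (f : Fin 3 → ℝ × ℝ) (i : Fin 3) => Complex.measurableEquivRealProd.symm (f i)) ∘
      ⇑(MeasurableEquiv.arrowProdEquivProdArrow ℝ ℝ (Fin 3)).symm := ?_
  · rw [e]; exact this
  ext p i
  simp [xy, Complex.measurableEquivRealProd, MeasurableEquiv.arrowProdEquivProdArrow, Equiv.arrowProdEquivProdArrow]
  apply Complex.ext <;> simp

/-- slice norms -/
def slice (F : C3 → ℂ) (y : R3) : ℝ≥0∞ := ∫⁻ x : R3, (‖F (xy x y)‖₊ : ℝ≥0∞) ^ 2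

lemma ball_slice {F : C3 → ℂ} {z0 : C3} {R : ℝ} (hF : DifferentiableOn ℂ F (Metric.ball z0 R)) :
    ∫⁻ w in Metric.ball z0 R, (‖F w‖₊ : ℝ≥0∞) ^ 2 ≤ ∫⁻ y in Metric.ball (imv z0) R, slice F y := by
  set u : C3 → ℝ≥0∞ := (Metric.ball z0 R).indicator (fun w => (‖F w‖₊ : ℝ≥0∞) ^ 2) with hu
  have hum : Measurable u := by
    have hc : ContinuousOn (fun w => (‖F w‖₊ : ℝ≥0∞) ^ 2) (Metric.ball z0 R) := by
      have := hF.continuousOn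
      have h1 : Continuous fun t : ℂ => (‖t‖₊ : ℝ≥0∞) ^ 2 := by fun_prop
      exact h1.comp_continuousOn this
    classical
    have := hc.measurable_piecewise (g := fun _ => (0:ℝ≥0∞)) continuousOn_const measurableSet_ball
    convert this using 1
    rw [hu]
    exact (piecewise_eq_indicator).symm
  rw [← lintegral_indicator measurableSet_ball, ← hu, ← mp_xy.lintegral_comp hum,
    lintegral_prod_symm (fun p : R3 × R3 => u (xy p.1 p.2)) (hum.comp mp_xy.measurable).aemeasurable, ← lintegral_indicator measurableSet_ball]
  refine lintegral_mono fun y => ?_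
  by_cases hy : y ∈ Metric.ball (imv z0) R
  · rw [indicator_of_mem hy]
    refine lintegral_mono fun x => ?_
    exact indicator_le_self _ _ _
  · rw [indicator_of_notMem hy]
    have : ∀ x, u (xy x y) = 0 := by
      intro x
      refine indicator_of_notMem (fun h => hy ?_) _
      rw [mem_ball_iff_norm] at h ⊢
      refine lt_of_le_of_lt ?_ h
      refine (pi_norm_le_iff_of_nonneg (norm_nonneg _)).2 fun i => ?_
      refine le_trans ?_ (norm_le_pi_norm _ i)
      have := Complex.abs_im_le_norm ((xy x y - z0) i)
      simpa [xy, imv] using this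
    simp [this]

lemma ball_L {ε : ℝ} (hε : 0 < ε) {y0 y : R3} (hy0 : y0 ∈ Lambda3) (hy : y ∈ Metric.ball (y0 + ε • e0) (ε / 8)) :
    y ∈ Lambda3 ∧ ε ^ 2 / 4 ≤ DeltaL y := by
  set p : R3 := y - y0 - (ε/2) • e0 with hp
  rw [mem_ball_iff_norm] at hy
  have hc : ∀ i, |(y - (y0 + ε • e0)) i| < ε / 8 := fun i => (norm_le_pi_norm _ i).trans_lt hy
  have h0 := abs_lt.1 (hc 0)
  have h1 := abs_lt.1 (hc 1)
  have h2 := abs_lt.1 (hc 2)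
  have s0 : e0 0 = 1 := rfl
  have s1 : e0 1 = 0 := rfl
  have s2 : e0 2 = 0 := rfl
  simp only [Pi.sub_apply, Pi.add_apply, Pi.smul_apply, smul_eq_mul, s0, s1, s2, mul_one, mul_zero, add_zero] at h0 h1 h2
  have hpL : p ∈ Lambda3 := by
    rw [mem_L]
    simp only [hp, Pi.sub_apply, Pi.smul_apply, smul_eq_mul, s0, s1, s2, mul_one, mul_zero, sub_zero]
    constructor
    · linarith
    · nlinarith
  have hy1 : y = (y0 + p) + (ε/2) • e0 := by rw [hp]; ext i; simp; ring
  have hw := add_L hy0 hpL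
  have he := smul_L (half_pos hε) e0_L
  have hd := delta_add hw he
  have hde : DeltaL ((ε/2) • e0) = ε^2/4 := by simp [DeltaL, e0]; ring
  rw [hy1]
  exact ⟨add_L hw he, by have := delta_pos hw; linarith⟩

/-- local integrability in the cone direction of slice norms -/
def SB (F : C3 → ℂ) : Prop := ∀ ε > 0, ∃ K : ℝ≥0∞, K < ⊤ ∧ ∀ y0 ∈ Lambda3,
  ∫⁻ y in Metric.ball (y0 + ε • e0) (ε / 8), slice F y ≤ K

lemma hardy_slice (F : C3 → ℂ) {y : R3} (hy : y ∈ Lambda3) : slice F y ≤ hardyNormSq F :=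
  le_iSup₂ (f := fun y (_ : y ∈ Lambda3) => slice F y) y hy

lemma hardy_SB {F : C3 → ℂ} (h : hardyNormSq F < ⊤) : SB F := by
  intro ε hε
  refine ⟨hardyNormSq F * volume (Metric.ball (0:R3) (ε/8)), ENNReal.mul_lt_top h measure_ball_lt_top, fun y0 hy0 => ?_⟩
  refine (setLIntegral_mono' measurableSet_ball fun y hy => hardy_slice F (ball_L hε hy0 hy).1).trans ?_
  rw [setLIntegral_const, Measure.addHaar_ball_center]

lemma berg_SB {m : ℕ} (hm : 1 ≤ m) {F : C3 → ℂ} (h : bergNormSqTube (2 * m) F < ⊤) : SB F := by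
  intro ε hε
  have hm' : (1:ℝ) ≤ m := by exact_mod_cast hm
  set c : ℝ := (ε^2/4) ^ (2 * m - 3/2 : ℝ) with hc
  have hc0 : 0 < c := by positivity
  have hb0 : ENNReal.ofReal c ≠ 0 := by simpa using hc0
  refine ⟨bergNormSqTube (2 * m) F / ENNReal.ofReal c, ENNReal.div_lt_top h.ne hb0, fun y0 hy0 => ?_⟩
  rw [ENNReal.le_div_iff_mul_le (Or.inl hb0) (Or.inl ENNReal.ofReal_ne_top), ← lintegral_mul_const' _ _ ENNReal.ofReal_ne_top]
  have : ∫⁻ y in Metric.ball (y0 + ε • e0) (ε / 8), slice F y * ENNReal.ofReal (DeltaL y ^ (2 * m - 3/2 : ℝ)) ≤ bergNormSqTube (2 * m) F :=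
    lintegral_mono_set fun y hy => (ball_L hε hy0 hy).1
  refine le_trans (setLIntegral_mono' measurableSet_ball fun y hy => ?_) this
  gcongr
  rw [hc]
  exact Real.rpow_le_rpow (by positivity) (ball_L hε hy0 hy).2 (by linarith)

lemma bounded_of_SB {F : C3 → ℂ} (hF : DifferentiableOn ℂ F TLambda3) (h : SB F) {ε : ℝ} (hε : 0 < ε) :
    ∃ M : ℝ, ∀ z ∈ TLambda3, ‖F (z + xy 0 (ε • e0))‖ ≤ M := by
  obtain ⟨K, hK, hKb⟩ := h ε hε
  have hv0 : volume (Metric.ball (0:C3) (ε/8)) ≠ 0 := (Metric.measure_ball_pos _ _ (by positivity)).ne'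
  have hvt : volume (Metric.ball (0:C3) (ε/8)) ≠ ⊤ := measure_ball_lt_top.ne
  set Q := K / volume (Metric.ball (0:C3) (ε/8)) with hQ
  have hQt : Q ≠ ⊤ := (ENNReal.div_lt_top hK.ne hv0).ne
  refine ⟨1 + Q.toReal, fun z hz => ?_⟩
  have him : ∀ w : C3, imv (w + xy 0 (ε • e0)) = imv w + ε • e0 := by
    intro w; ext i; simp [imv, xy]
  have hsub : Metric.ball (z + xy 0 (ε • e0)) (ε/8) ⊆ TLambda3 := by
    intro w hw
    rw [T_eq, mem_preimage]
    refine (ball_L hε (y0 := imv z) hz ?_).1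
    rw [mem_ball_iff_norm] at hw ⊢
    refine lt_of_le_of_lt ?_ hw
    refine (pi_norm_le_iff_of_nonneg (norm_nonneg _)).2 fun i => ?_
    refine le_trans ?_ (norm_le_pi_norm _ i)
    have := Complex.abs_im_le_norm ((w - (z + xy 0 (ε • e0))) i)
    simpa [xy, imv] using this
  have hF' := hF.mono hsub
  have h1 := (sub_mean hF').trans (ball_slice hF')
  rw [him] at h1
  have h2 := h1.trans (hKb (imv z) hz)
  rw [mul_comm, ← ENNReal.le_div_iff_mul_le (Or.inl hv0) (Or.inl hvt), ← hQ] at h2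
  have h3 : ‖F (z + xy 0 (ε • e0))‖ ^ 2 ≤ Q.toReal := by
    have := ENNReal.toReal_mono hQt h2
    simpa using this
  nlinarith [sq_nonneg (‖F (z + xy 0 (ε • e0))‖ - 1), norm_nonneg (F (z + xy 0 (ε • e0)))]

end BC

namespace BC
open Filter Topology

/-- linear factor -/
def lf (ε : ℝ) (w : ℂ) : ℂ := 1 - Complex.I * (ε * w)

lemma lf_one {ε : ℝ} (hε : 0 ≤ ε) {w : ℂ} (hw : 0 ≤ w.im) : 1 ≤ ‖lf ε w‖ := by
  have := Complex.re_le_norm (lf ε w)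
  have h : (lf ε w).re = 1 + ε * w.im := by simp [lf]
  rw [h] at this
  nlinarith [mul_nonneg hε hw]

lemma lf_re {ε : ℝ} (hε : 0 ≤ ε) (w : ℂ) : ε * |w.re| ≤ ‖lf ε w‖ := by
  have := Complex.abs_im_le_norm (lf ε w)
  have h : (lf ε w).im = -(ε * w.re) := by simp [lf]
  rwa [h, abs_neg, abs_mul, abs_of_nonneg hε] at this

/-- denominator -/
def Den (ε : ℝ) (z : C3) : ℂ := lf ε (z 0) * lf ε (z 0 + z 1) * lf ε (z 0 + z 2)

lemma im_pos3 {z : C3} (hz : z ∈ TLambda3) : 0 ≤ (z 0).im ∧ 0 ≤ (z 0 + z 1).im ∧ 0 ≤ (z 0 + z 2).im := by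
  have h : imv z ∈ Lambda3 := hz
  have h1 := h.1
  rw [mem_L] at h
  obtain ⟨h0, h2⟩ := h
  simp only [imv] at h0 h1 h2
  refine ⟨h0.le, by simpa using h1.le, ?_⟩
  have := abs_le_of_sq_le_sq (a := (z 2).im) (b := (z 0).im) (by nlinarith [sq_nonneg (z 1).im]) h0.le
  have := (abs_le.1 this).1
  simp; linarith

lemma Den_one {ε : ℝ} (hε : 0 ≤ ε) {z : C3} (hz : z ∈ TLambda3) : 1 ≤ ‖Den ε z‖ := by
  obtain ⟨h0, h1, h2⟩ := im_pos3 hz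
  unfold Den
  rw [norm_mul, norm_mul]
  have a := lf_one hε h0
  have b := lf_one hε h1
  have c := lf_one hε h2
  have ab : 1 ≤ ‖lf ε (z 0)‖ * ‖lf ε (z 0 + z 1)‖ := by nlinarith
  nlinarith

lemma Den_lower {ε : ℝ} (hε : 0 < ε) (hε1 : ε ≤ 1) {z : C3} (hz : z ∈ TLambda3) :
    ε / 4 * (1 + ‖rev z‖) ≤ ‖Den ε z‖ := by
  obtain ⟨h0, h1, h2⟩ := im_pos3 hz
  have hD := Den_one hε.le hz
  have a := lf_one hε.le h0
  have b := lf_one hε.le h1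
  have c := lf_one hε.le h2
  have a' := lf_re hε.le (z 0)
  have b' := lf_re hε.le (z 0 + z 1)
  have c' := lf_re hε.le (z 0 + z 2)
  have hDe : ‖Den ε z‖ = ‖lf ε (z 0)‖ * ‖lf ε (z 0 + z 1)‖ * ‖lf ε (z 0 + z 2)‖ := by
    unfold Den; rw [norm_mul, norm_mul]
  set A := ‖lf ε (z 0)‖
  set B := ‖lf ε (z 0 + z 1)‖
  set C := ‖lf ε (z 0 + z 2)‖
  have hA : A ≤ ‖Den ε z‖ := by
    rw [hDe, mul_assoc]; exact le_mul_of_one_le_right (by linarith) (by nlinarith)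
  have hB : B ≤ ‖Den ε z‖ := by
    rw [hDe, mul_comm A B, mul_assoc]; exact le_mul_of_one_le_right (by linarith) (by nlinarith)
  have hC : C ≤ ‖Den ε z‖ := by
    rw [hDe, mul_comm]; exact le_mul_of_one_le_right (by linarith) (by nlinarith)
  have hn : ε * ‖rev z‖ ≤ 2 * ‖Den ε z‖ := by
    rw [mul_comm, ← le_div_iff₀ hε]
    refine (pi_norm_le_iff_of_nonneg (by positivity)).2 fun i => ?_
    rw [le_div_iff₀ hε, mul_comm]
    simp only [rev, Real.norm_eq_abs]
    simp only [Complex.add_re] at b' c'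
    fin_cases i
    · simp; linarith
    · have : |(z 1).re| ≤ |(z 0).re + (z 1).re| + |(z 0).re| := by
        have := abs_sub ((z 0).re + (z 1).re) (z 0).re
        simpa using this
      simp; nlinarith
    · have : |(z 2).re| ≤ |(z 0).re + (z 2).re| + |(z 0).re| := by
        have := abs_sub ((z 0).re + (z 2).re) (z 0).re
        simpa using this
      simp; nlinarith
  nlinarith

/-- regularization -/
def reg (ε : ℝ) (F : C3 → ℂ) (z : C3) : ℂ := F (z + xy 0 (ε • e0)) * ((Den ε z)⁻¹) ^ 4

lemma imv_shift (ε : ℝ) (w : C3) : imv (w + xy 0 (ε • e0)) = imv w + ε • e0 := by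
  ext i; simp [imv, xy]

lemma shift_T {ε : ℝ} (hε : 0 ≤ ε) {z : C3} (hz : z ∈ TLambda3) : z + xy 0 (ε • e0) ∈ TLambda3 := by
  rw [T_eq, mem_preimage, imv_shift]
  rcases hε.eq_or_lt with rfl | h
  · simpa using! hz
  · exact add_L hz (smul_L h e0_L)

lemma Den_ne {ε : ℝ} (hε : 0 ≤ ε) {z : C3} (hz : z ∈ TLambda3) : Den ε z ≠ 0 := by
  have := Den_one hε hz
  intro h; rw [h] at this; simp at this; linarith

lemma reg_diff {F : C3 → ℂ} (hF : DifferentiableOn ℂ F TLambda3) {ε : ℝ} (hε : 0 ≤ ε) :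
    DifferentiableOn ℂ (reg ε F) TLambda3 := by
  refine (hF.comp (by fun_prop) fun z hz => shift_T hε hz).mul ?_
  refine (DifferentiableOn.inv ?_ fun z hz => Den_ne hε hz).pow 4
  unfold Den lf; fun_prop

lemma reg_nice {F : C3 → ℂ} (hF : DifferentiableOn ℂ F TLambda3) (h : SB F) {ε : ℝ} (hε : 0 < ε) (hε1 : ε ≤ 1) :
    Nice (reg ε F) := by
  refine ⟨reg_diff hF hε.le, ?_⟩
  obtain ⟨M, hM⟩ := bounded_of_SB hF h hε
  have hM0 : 0 ≤ M := (norm_nonneg _).trans (hM (xy 0 e0) (xy_T.2 e0_L))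
  refine ⟨M * ((ε/4)⁻¹)^4, fun x y hy => ?_⟩
  have hz : xy x y ∈ TLambda3 := xy_T.2 hy
  have h1 := Den_lower hε hε1 hz
  rw [rev_xy] at h1
  unfold reg
  rw [norm_mul, norm_pow, norm_inv, mul_assoc]
  refine mul_le_mul (hM _ hz) ?_ (by positivity) hM0
  have : (1 + ‖x‖) ^ (-4:ℝ) = ((1 + ‖x‖)⁻¹)^4 := by
    rw [Real.rpow_neg (by positivity), inv_pow]; congr 1
    exact_mod_cast Real.rpow_natCast (1 + ‖x‖) 4
  rw [this, ← mul_pow, ← mul_inv]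
  gcongr

lemma reg_slice (F : C3 → ℂ) {ε : ℝ} (hε : 0 < ε) {y : R3} (hy : y ∈ Lambda3) :
    slice (reg ε F) y ≤ slice F (y + ε • e0) := by
  refine lintegral_mono fun x => ?_
  have hz : xy x y ∈ TLambda3 := xy_T.2 hy
  have h1 := Den_one hε.le hz
  have e : xy x y + xy 0 (ε • e0) = xy x (y + ε • e0) := by rw [← xy_add]; simp
  unfold reg
  rw [e]
  have h2 : ‖F (xy x (y + ε • e0)) * ((Den ε (xy x y))⁻¹)^4‖ ≤ ‖F (xy x (y + ε • e0))‖ := by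
    rw [norm_mul, norm_pow, norm_inv]
    refine mul_le_of_le_one_right (norm_nonneg _) (pow_le_one₀ (by positivity) (inv_le_one_of_one_le₀ h1))
  have h3 : ‖F (xy x (y + ε • e0)) * ((Den ε (xy x y))⁻¹)^4‖₊ ≤ ‖F (xy x (y + ε • e0))‖₊ := h2
  gcongr

lemma reg_hardy (F : C3 → ℂ) {ε : ℝ} (hε : 0 < ε) : hardyNormSq (reg ε F) ≤ hardyNormSq F :=
  iSup₂_le fun _ hy => (reg_slice F hε hy).trans (hardy_slice F (add_L hy (smul_L hε e0_L)))

lemma reg_berg (m : ℕ) (hm : 1 ≤ m) (F : C3 → ℂ) {ε : ℝ} (hε : 0 < ε) :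
    bergNormSqTube (2 * m) (reg ε F) ≤ bergNormSqTube (2 * m) F := by
  have hm' : (1:ℝ) ≤ m := by exact_mod_cast hm
  have he := smul_L hε e0_L
  set φ : R3 → ℝ≥0∞ := Lambda3.indicator (fun y => slice F y * ENNReal.ofReal (DeltaL y ^ (2 * m - 3/2 : ℝ))) with hφ
  have h1 : bergNormSqTube (2 * m) F = ∫⁻ y, φ y := (lintegral_indicator measurable_L _).symm
  rw [h1, ← lintegral_add_right_eq_self φ (ε • e0)]
  have h2 : bergNormSqTube (2 * m) (reg ε F) = ∫⁻ y in Lambda3, slice (reg ε F) y * ENNReal.ofReal (DeltaL y ^ (2 * m - 3/2 : ℝ)) := rfl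
  rw [h2, ← lintegral_indicator measurable_L]
  refine lintegral_mono fun y => ?_
  by_cases hy : y ∈ Lambda3
  · rw [indicator_of_mem hy, hφ, indicator_of_mem (add_L hy he)]
    refine mul_le_mul' (reg_slice F hε hy) (ENNReal.ofReal_le_ofReal ?_)
    refine Real.rpow_le_rpow (delta_pos hy).le ?_ (by linarith)
    have := delta_add hy he
    have := delta_pos he
    linarith
  · rw [indicator_of_notMem hy]; exact zero_le

lemma reg_UC {F : C3 → ℂ} (hF : DifferentiableOn ℂ F TLambda3) :
    UC TLambda3 (fun n : ℕ => reg (1 / ((n:ℝ) + 1)) F) F := by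
  intro z hz
  obtain ⟨r, hr, hb⟩ := Metric.nhds_basis_closedBall.mem_iff.1 (isOpen_T.mem_nhds hz)
  refine ⟨r, hr, fun δ hδ => ?_⟩
  have hK : IsCompact (Icc (0:ℝ) 1 ×ˢ Metric.closedBall z r) := isCompact_Icc.prod (isCompact_closedBall z r)
  have hcont : ContinuousOn (fun p : ℝ × C3 => reg p.1 F p.2) (Icc (0:ℝ) 1 ×ˢ Metric.closedBall z r) := by
    unfold reg
    refine ContinuousOn.mul ?_ (ContinuousOn.pow (ContinuousOn.inv₀ ?_ ?_) 4)
    · refine hF.continuousOn.comp ?_ fun p hp => shift_T hp.1.1 (hb hp.2)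
      unfold xy; refine Continuous.continuousOn ?_
      simp only [Pi.smul_apply]
      fun_prop
    · unfold Den lf; refine Continuous.continuousOn ?_; fun_prop
    · intro p hp; exact Den_ne hp.1.1 (hb hp.2)
  have hu := hK.uniformContinuousOn_of_continuous hcont
  rw [Metric.uniformContinuousOn_iff_le] at hu
  obtain ⟨η, hη, H⟩ := hu δ hδ
  have ht := tendsto_one_div_add_atTop_nhds_zero_nat (𝕜 := ℝ)
  filter_upwards [ht.eventually (ge_mem_nhds hη)] with n hn w hw
  have hw' := Metric.ball_subset_closedBall hw
  have hn0 : (0:ℝ) < 1 / ((n:ℝ) + 1) := by positivity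
  have hn1 : 1 / ((n:ℝ) + 1) ≤ 1 := by
    rw [div_le_one (by positivity)]; have : (0:ℝ) ≤ n := by positivity
    linarith
  have := H (1 / ((n:ℝ) + 1), w) ⟨⟨hn0.le, hn1⟩, hw'⟩ (0, w) ⟨⟨le_rfl, zero_le_one⟩, hw'⟩ (by
    rw [Prod.dist_eq, dist_self, Real.dist_eq, sub_zero, abs_of_pos hn0]
    exact max_le hn hη.le)
  rw [dist_eq_norm] at this
  have e : reg 0 F w = F w := by
    have : xy (0:R3) (0:R3) = 0 := by ext i; simp [xy]
    simp [reg, this, Den, lf]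
  simpa only [e] using this

end BC

namespace BC
open Filter Topology

lemma nn_sq {a : ℂ} : (‖a‖₊ : ℝ≥0∞) ^ 2 = ENNReal.ofReal (‖a‖ ^ 2) := by
  rw [ENNReal.ofReal_pow (norm_nonneg _), ofReal_norm]; rfl

lemma norm_cexp_real (t : ℝ) : ‖((Real.exp t : ℝ) : ℂ)‖ = Real.exp t := by
  rw [Complex.norm_real, Real.norm_of_nonneg (Real.exp_pos _).le]

lemma meas_exp (y : R3) :
    AEStronglyMeasurable (fun ξ : R3 => ((Real.exp (-2 * Real.pi * dotR y ξ) : ℝ) : ℂ)) volume := by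
  have := continuous_dotR_right y
  exact Continuous.aestronglyMeasurable (by fun_prop)

lemma memLp_mulDm {f : R3 → ℂ} (hf : LC f) {M : ℝ} (hM : ∀ ξ, ‖f ξ‖ ≤ M) (m : ℕ) {y : R3}
    (hy : y ∈ Lambda3) :
    MemLp (fun ξ => mulDm m f ξ * ((Real.exp (-2 * Real.pi * dotR y ξ) : ℝ) : ℂ)) 2 volume := by
  have hme := (hf.mulDm m).meas.mul (meas_exp y)
  refine (memLp_two_iff_integrable_sq_norm hme).2 ?_
  have h2 := ((hf.mulDm (2 * m)).int _ (smul_L (t := 2) two_pos hy)).const_mul M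
  refine h2.mono' (hme.norm.pow 2) (Eventually.of_forall fun ξ => ?_)
  simp only [Pi.mul_apply]
  rw [Real.norm_of_nonneg (by positivity), norm_mul, norm_cexp_real, mul_pow, ← Real.exp_nat_mul]
  have e1 : dotR ((2:ℝ) • y) ξ = 2 * dotR y ξ := by simp [dotR]; ring
  have e2 : ((2:ℕ):ℝ) * (-2 * Real.pi * dotR y ξ) = -2 * Real.pi * (2 * dotR y ξ) := by push_cast; ring
  rw [e1, e2, ← mul_assoc M]
  refine mul_le_mul_of_nonneg_right ?_ (Real.exp_pos _).le
  unfold mulDm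
  rw [norm_mul, norm_mul, norm_pow, norm_pow, mul_pow, ← pow_mul, mul_comm m 2]
  have := mul_le_mul_of_nonneg_left (hM ξ) (by positivity : 0 ≤ ‖((4 * Real.pi ^ 2 * DeltaL ξ : ℝ) : ℂ)‖ ^ (2 * m) * ‖f ξ‖)
  nlinarith [this]

lemma mulDm_zero (f : R3 → ℂ) : mulDm 0 f = f := by ext; simp [mulDm]

lemma hardy_lower {f : R3 → ℂ} (hf : LC f)
    (h2 : ∀ y ∈ Lambda3, MemLp (fun ξ => f ξ * ((Real.exp (-2 * Real.pi * dotR y ξ) : ℝ) : ℂ)) 2 volume) :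
    ∫⁻ ξ, (‖f ξ‖₊ : ℝ≥0∞) ^ 2 ≤ hardyNormSq (Lap f) := by
  set y : ℕ → R3 := fun n => (1 / ((n:ℝ) + 1)) • e0 with hy
  have hyL : ∀ n, y n ∈ Lambda3 := fun n => smul_L (by positivity) e0_L
  have hlim : ∀ ξ, Tendsto (fun n => (‖f ξ‖₊ : ℝ≥0∞) ^ 2 * ENNReal.ofReal (Real.exp (-4 * Real.pi * dotR (y n) ξ))) atTop
      (𝓝 ((‖f ξ‖₊ : ℝ≥0∞) ^ 2)) := by
    intro ξ
    have h1 : Tendsto (fun n => Real.exp (-4 * Real.pi * dotR (y n) ξ)) atTop (𝓝 1) := by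
      have ht := tendsto_one_div_add_atTop_nhds_zero_nat (𝕜 := ℝ)
      have e : ∀ n, dotR (y n) ξ = (1 / ((n:ℝ) + 1)) * dotR e0 ξ := fun n => by simp [dotR, hy]; ring
      simp only [e]
      have := (Real.continuous_exp.tendsto _).comp ((ht.mul_const (dotR e0 ξ)).const_mul (-4 * Real.pi))
      simpa [Function.comp_def] using this
    have h3 := ENNReal.Tendsto.const_mul (a := (‖f ξ‖₊ : ℝ≥0∞) ^ 2) (ENNReal.tendsto_ofReal h1) (Or.inr (by simp))
    simpa using h3
  calc ∫⁻ ξ, (‖f ξ‖₊ : ℝ≥0∞) ^ 2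
      = ∫⁻ ξ, liminf (fun n => (‖f ξ‖₊ : ℝ≥0∞) ^ 2 * ENNReal.ofReal (Real.exp (-4 * Real.pi * dotR (y n) ξ))) atTop :=
        lintegral_congr fun ξ => (hlim ξ).liminf_eq.symm
    _ ≤ liminf (fun n => ∫⁻ ξ, (‖f ξ‖₊ : ℝ≥0∞) ^ 2 * ENNReal.ofReal (Real.exp (-4 * Real.pi * dotR (y n) ξ))) atTop := by
        refine lintegral_liminf_le' fun n => ?_
        have := continuous_dotR_right (y n)
        exact (hf.meas.enorm.pow_const 2).mul (Continuous.measurable (by fun_prop)).aemeasurable.ennreal_ofReal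
    _ ≤ hardyNormSq (Lap f) := by
        refine liminf_le_of_le (by isBoundedDefault) fun b hb => ?_
        obtain ⟨n, hn⟩ := hb.exists
        refine hn.trans ?_
        rw [← hf.plancherel (hyL n) (h2 _ (hyL n))]
        exact hardy_slice (Lap f) (hyL n)

lemma hardy_upper {f : R3 → ℂ} (hf : LC f)
    (h2 : ∀ y ∈ Lambda3, MemLp (fun ξ => f ξ * ((Real.exp (-2 * Real.pi * dotR y ξ) : ℝ) : ℂ)) 2 volume) :
    hardyNormSq (Lap f) ≤ ∫⁻ ξ, (‖f ξ‖₊ : ℝ≥0∞) ^ 2 := by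
  refine iSup₂_le fun y hy => ?_
  refine (hf.plancherel hy (h2 y hy)).le.trans ?_
  refine lintegral_mono fun ξ => ?_
  by_cases hξ : ξ ∈ Cc
  · refine mul_le_of_le_one_right' ?_
    rw [ENNReal.ofReal_le_one, Real.exp_le_one_iff]
    have := hξ y hy
    nlinarith [Real.pi_pos, mul_nonneg Real.pi_pos.le this]
  · simp [hf.supp ξ hξ]

lemma berg_congr (ν : ℝ) {F G : C3 → ℂ} (h : EqOn F G TLambda3) : bergNormSqTube ν F = bergNormSqTube ν G := by
  refine setLIntegral_congr_fun measurable_L fun y hy => ?_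
  congr 1
  refine lintegral_congr fun x => ?_
  have : F (xy x y) = G (xy x y) := h (xy_T.2 hy)
  unfold xy at this
  rw [this]

lemma hardy_congr {F G : C3 → ℂ} (h : EqOn F G TLambda3) : hardyNormSq F = hardyNormSq G := by
  refine iSup_congr fun y => iSup_congr fun hy => ?_
  refine lintegral_congr fun x => ?_
  have : F (xy x y) = G (xy x y) := h (xy_T.2 hy)
  unfold xy at this
  rw [this]

/-- the constant -/
def cst (m : ℕ) : ℝ := (4 * Real.pi ^ 2) ^ (2 * m)
lemma cst_pos (m : ℕ) : 0 < cst m := by unfold cst; positivity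

lemma pt_id (m : ℕ) (f : R3 → ℂ) {ξ : R3} (hξ : ξ ∈ Lambda3) :
    (‖mulDm m f ξ‖₊ : ℝ≥0∞) ^ 2 * ENNReal.ofReal (DeltaL ξ ^ (-(2 * m : ℝ))) =
      ENNReal.ofReal (cst m) * (‖f ξ‖₊ : ℝ≥0∞) ^ 2 := by
  have hd := delta_pos hξ
  rw [nn_sq, nn_sq, ← ENNReal.ofReal_mul (by positivity), ← ENNReal.ofReal_mul (cst_pos m).le]
  congr 1
  have e : DeltaL ξ ^ (-(2 * m : ℝ)) = (DeltaL ξ ^ (2 * m))⁻¹ := by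
    rw [Real.rpow_neg hd.le]; congr 1
    exact_mod_cast Real.rpow_natCast (DeltaL ξ) (2 * m)
  rw [e]
  unfold mulDm cst
  rw [norm_mul, norm_pow, Complex.norm_real, Real.norm_of_nonneg (by positivity), mul_pow, ← pow_mul,
    mul_comm m 2, mul_pow (4 * Real.pi ^ 2)]
  have : DeltaL ξ ^ (2 * m) ≠ 0 := by positivity
  field_simp

lemma berg_mulDm (m : ℕ) (hm : 1 ≤ m) {f : R3 → ℂ} (hf : LC f)
    (h2 : ∀ y ∈ Lambda3, MemLp (fun ξ => mulDm m f ξ * ((Real.exp (-2 * Real.pi * dotR y ξ) : ℝ) : ℂ)) 2 volume) :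
    bergNormSqTube (2 * m) (Lap (mulDm m f)) =
      Gam m * (ENNReal.ofReal (cst m) * ∫⁻ ξ, (‖f ξ‖₊ : ℝ≥0∞) ^ 2) := by
  rw [berg_Lap m hm (hf.mulDm m) h2, setLIntegral_congr_fun measurable_L fun ξ hξ => pt_id m f hξ,
    lintegral_const_mul' _ _ (by simp)]
  have := hf.setL (fun _ => 1)
  simp only [mul_one] at this
  rw [this]

lemma fatou {μ : Measure C3} {Gn : ℕ → C3 → ℂ} {G : C3 → ℂ} (h : UC TLambda3 Gn G)
    (hd : ∀ n, DifferentiableOn ℂ (Gn n) TLambda3) {K : ℝ≥0∞}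
    (hb : ∀ n, ∫⁻ z in TLambda3, (‖Gn n z‖₊ : ℝ≥0∞) ^ 2 ∂μ ≤ K) :
    ∫⁻ z in TLambda3, (‖G z‖₊ : ℝ≥0∞) ^ 2 ∂μ ≤ K := by
  calc ∫⁻ z in TLambda3, (‖G z‖₊ : ℝ≥0∞) ^ 2 ∂μ
      = ∫⁻ z in TLambda3, liminf (fun n => (‖Gn n z‖₊ : ℝ≥0∞) ^ 2) atTop ∂μ := by
        refine setLIntegral_congr_fun isOpen_T.measurableSet fun z hz => ?_
        refine (Tendsto.liminf_eq ?_).symm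
        exact ((ENNReal.continuous_pow 2).tendsto _).comp ((h.tendsto hz).enorm)
    _ ≤ liminf (fun n => ∫⁻ z in TLambda3, (‖Gn n z‖₊ : ℝ≥0∞) ^ 2 ∂μ) atTop := by
        refine lintegral_liminf_le' fun n => ?_
        exact ((hd n).continuousOn.aemeasurable isOpen_T.measurableSet).enorm.pow_const 2
    _ ≤ K := by
        refine liminf_le_of_le (by isBoundedDefault) fun b hb' => ?_
        obtain ⟨n, hn⟩ := hb'.exists
        exact hn.trans (hb n)

lemma dir1 (m : ℕ) (hm : 1 ≤ m) {F : C3 → ℂ} (hN : Nice F) :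
    bergNormSqTube (2 * m) (Box^[m] F) ≤ Gam m * (ENNReal.ofReal (cst m) * hardyNormSq F) := by
  obtain ⟨f, hf, hE, M, hM⟩ := paley_wiener hN
  have h1 : EqOn (Box^[m] F) (Lap (mulDm m f)) TLambda3 :=
    (eqOn_box_iter isOpen_T m hE).trans (hf.box_iter m)
  rw [berg_congr _ h1, berg_mulDm m hm hf fun y hy => memLp_mulDm hf hM m hy, hardy_congr hE]
  gcongr
  refine hardy_lower hf fun y hy => ?_
  have := memLp_mulDm hf hM 0 hy
  rwa [mulDm_zero] at this

lemma dir2 (m : ℕ) (hm : 1 ≤ m) {G : C3 → ℂ} (hN : Nice G) (hG : bergNormSqTube (2 * m) G < ⊤) :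
    ∃ F : C3 → ℂ, DifferentiableOn ℂ F TLambda3 ∧ EqOn (Box^[m] F) G TLambda3 ∧
      Gam m * (ENNReal.ofReal (cst m) * hardyNormSq F) ≤ bergNormSqTube (2 * m) G := by
  obtain ⟨g, hg, hE, M, hM⟩ := paley_wiener hN
  set f : R3 → ℂ := Lambda3.indicator (fun ξ => ((((4 * Real.pi ^ 2 * DeltaL ξ : ℝ) : ℂ)) ^ m)⁻¹ * g ξ) with hfd
  have hmf : ∀ ξ ∈ Lambda3, mulDm m f ξ = g ξ := by
    intro ξ hξ
    have hd := delta_pos hξ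
    have : (((4 * Real.pi ^ 2 * DeltaL ξ : ℝ) : ℂ)) ^ m ≠ 0 := by
      refine pow_ne_zero _ (Complex.ofReal_ne_zero.2 (by positivity))
    unfold mulDm
    rw [hfd, indicator_of_mem hξ, mul_inv_cancel_left₀ this]
  have hae : mulDm m f =ᵐ[volume] g := by
    have : ∀ᵐ ξ, ξ ∉ Cc \ Lambda3 := measure_eq_zero_iff_ae_notMem.1 Cc_diff_null
    filter_upwards [this] with ξ hξ
    by_cases h : ξ ∈ Lambda3
    · exact hmf ξ h
    · have h' : ξ ∉ Cc := fun hc => hξ ⟨hc, h⟩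
      rw [hg.supp ξ h', mulDm, hfd, indicator_of_notMem h, mul_zero]
  have hgM : ∀ y ∈ Lambda3, MemLp (fun ξ => g ξ * ((Real.exp (-2 * Real.pi * dotR y ξ) : ℝ) : ℂ)) 2 volume := by
    intro y hy
    have := memLp_mulDm hg hM 0 hy
    rwa [mulDm_zero] at this
  have hsetf : ∫⁻ ξ, (‖f ξ‖₊ : ℝ≥0∞) ^ 2 = ∫⁻ ξ in Lambda3, (‖f ξ‖₊ : ℝ≥0∞) ^ 2 := by
    rw [← lintegral_indicator measurable_L]
    refine lintegral_congr fun ξ => ?_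
    by_cases h : ξ ∈ Lambda3
    · rw [indicator_of_mem h]
    · rw [indicator_of_notMem h, hfd, indicator_of_notMem h]; simp
  have hberg : bergNormSqTube (2 * m) G = Gam m * (ENNReal.ofReal (cst m) * ∫⁻ ξ, (‖f ξ‖₊ : ℝ≥0∞) ^ 2) := by
    rw [berg_congr _ hE, berg_Lap m hm hg hgM, hsetf,
      ← lintegral_const_mul' (ENNReal.ofReal (cst m)) _ ENNReal.ofReal_ne_top]
    congr 1
    refine setLIntegral_congr_fun measurable_L fun ξ hξ => ?_
    rw [← pt_id m f hξ, hmf ξ hξ]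
  have hfin : ∫⁻ ξ, (‖f ξ‖₊ : ℝ≥0∞) ^ 2 < ⊤ := by
    rw [hberg] at hG
    by_contra hc
    rw [not_lt, top_le_iff] at hc
    rw [hc, ENNReal.mul_top (by simpa using cst_pos m), ENNReal.mul_top (Gam_pos m).ne'] at hG
    exact lt_irrefl _ hG
  have hfm : AEStronglyMeasurable f volume := by
    refine AEStronglyMeasurable.indicator ?_ measurable_L
    refine AEStronglyMeasurable.mul ?_ hg.meas
    refine Measurable.aestronglyMeasurable ?_
    unfold DeltaL; fun_prop
  have hsq : Integrable (fun ξ => ‖f ξ‖ ^ 2) := by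
    refine ⟨hfm.norm.pow 2, ?_⟩
    rw [hasFiniteIntegral_iff_ofReal (Eventually.of_forall fun ξ => by positivity)]
    simpa only [nn_sq] using hfin
  have hf0 : ∀ ξ, ξ ∉ Cc → f ξ = 0 := fun ξ hξ => by
    rw [hfd, indicator_of_notMem fun h => hξ (L_sub_Cc h)]
  have hf : LC f := by
    refine ⟨hfm, hf0, fun y hy => ?_⟩
    obtain ⟨δ, hδ, hb⟩ := dual_lower hy
    have hc := continuous_dotR_right y
    refine (hsq.add (integrable_exp_norm (a := 4 * Real.pi * δ) (by positivity))).mono'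
      (hfm.norm.mul (Continuous.aestronglyMeasurable (by fun_prop))) (Eventually.of_forall fun ξ => ?_)
    rw [Real.norm_of_nonneg (by positivity), Pi.add_apply]
    by_cases hξ : ξ ∈ Cc
    · have h1 : Real.exp (-2 * Real.pi * dotR y ξ) ^ 2 ≤ Real.exp (-(4 * Real.pi * δ) * ‖ξ‖) := by
        rw [← Real.exp_nat_mul]
        refine Real.exp_le_exp.2 ?_
        have := mul_le_mul_of_nonneg_left (hb ξ hξ) Real.pi_pos.le
        push_cast; nlinarith
      have := Real.exp_pos (-2 * Real.pi * dotR y ξ)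
      nlinarith [sq_nonneg (‖f ξ‖ - Real.exp (-2 * Real.pi * dotR y ξ)), norm_nonneg (f ξ)]
    · rw [hf0 ξ hξ]; simp; positivity
  have hfM : ∀ y ∈ Lambda3, MemLp (fun ξ => f ξ * ((Real.exp (-2 * Real.pi * dotR y ξ) : ℝ) : ℂ)) 2 volume := by
    intro y hy
    have hme := hfm.mul (meas_exp y)
    refine (memLp_two_iff_integrable_sq_norm hme).2 ?_
    refine hsq.mono' (hme.norm.pow 2) (Eventually.of_forall fun ξ => ?_)
    simp only [Pi.mul_apply]
    rw [Real.norm_of_nonneg (by positivity), norm_mul, norm_cexp_real]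
    by_cases hξ : ξ ∈ Cc
    · have h1 : Real.exp (-2 * Real.pi * dotR y ξ) ≤ 1 := by
        rw [Real.exp_le_one_iff]
        nlinarith [mul_nonneg Real.pi_pos.le (hξ y hy)]
      gcongr
      exact mul_le_of_le_one_right (norm_nonneg _) h1
    · rw [hf0 ξ hξ]; simp
  refine ⟨Lap f, hf.diff, ?_, ?_⟩
  · refine (hf.box_iter m).trans fun z hz => ?_
    rw [hE hz]
    unfold Lap
    refine integral_congr_ae ?_
    filter_upwards [hae] with ξ hξ
    rw [hξ]
  · rw [hberg]
    gcongr
    exact hardy_upper hf hfM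

lemma eps_pos (n : ℕ) : (0:ℝ) < 1 / ((n:ℝ) + 1) := by positivity
lemma eps_le (n : ℕ) : 1 / ((n:ℝ) + 1) ≤ 1 := by
  rw [div_le_one (by positivity)]
  have : (0:ℝ) ≤ n := by positivity
  linarith

theorem main (m : ℕ) (hm : 1 ≤ m)
    (μ : Measure (Fin 3 → ℂ)) :
    (∃ A : ℝ, 0 < A ∧ ∀ F : (Fin 3 → ℂ) → ℂ,
        DifferentiableOn ℂ F TLambda3 → hardyNormSq F < ⊤ →
        (∫⁻ z in TLambda3, (‖Box^[m] F z‖₊ : ℝ≥0∞) ^ 2 ∂μ)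
          ≤ ENNReal.ofReal A * hardyNormSq F)
    ↔ (∃ C : ℝ, 0 < C ∧ ∀ G : (Fin 3 → ℂ) → ℂ,
        DifferentiableOn ℂ G TLambda3 → bergNormSqTube (2 * m) G < ⊤ →
        (∫⁻ z in TLambda3, (‖G z‖₊ : ℝ≥0∞) ^ 2 ∂μ)
          ≤ ENNReal.ofReal C * bergNormSqTube (2 * m) G) := by
  have hΓt := Gam_lt_top m hm
  have hΓ0 := Gam_pos m
  set k : ℝ := (Gam m).toReal * cst m with hk
  have hk0 : 0 < k := mul_pos (ENNReal.toReal_pos hΓ0.ne' hΓt.ne) (cst_pos m)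
  have hkE : ∀ t : ℝ≥0∞, Gam m * (ENNReal.ofReal (cst m) * t) = ENNReal.ofReal k * t := by
    intro t
    rw [hk, ENNReal.ofReal_mul ENNReal.toReal_nonneg, ENNReal.ofReal_toReal hΓt.ne, mul_assoc]
  constructor
  · rintro ⟨A, hA, H⟩
    refine ⟨A / k, by positivity, fun G hG hGb => ?_⟩
    refine fatou (reg_UC hG) (fun n => reg_diff hG (eps_pos n).le) fun n => ?_
    have hbn := reg_berg m hm G (eps_pos n)
    obtain ⟨F, hF, hE, hle⟩ := dir2 m hm (reg_nice hG (berg_SB hm hGb) (eps_pos n) (eps_le n)) (hbn.trans_lt hGb)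
    rw [hkE] at hle
    have hle2 := hle.trans hbn
    have hk' : ENNReal.ofReal k ≠ 0 := by simpa using hk0
    have hle3 : hardyNormSq F ≤ (ENNReal.ofReal k)⁻¹ * bergNormSqTube (2 * m) G := by
      rw [mul_comm, ← div_eq_mul_inv, ENNReal.le_div_iff_mul_le (Or.inl hk') (Or.inl ENNReal.ofReal_ne_top), mul_comm]
      exact hle2
    have hFt : hardyNormSq F < ⊤ :=
      hle3.trans_lt (ENNReal.mul_lt_top (ENNReal.inv_lt_top.2 (pos_iff_ne_zero.2 hk')) hGb)
    have := H F hF hFt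
    rw [setLIntegral_congr_fun isOpen_T.measurableSet fun z hz => congrArg (fun w : ℂ => (‖w‖₊ : ℝ≥0∞) ^ 2) (hE hz)] at this
    refine this.trans ?_
    rw [div_eq_mul_inv, ENNReal.ofReal_mul hA.le, ENNReal.ofReal_inv_of_pos hk0, mul_assoc]
    gcongr
  · rintro ⟨C, hC, H⟩
    refine ⟨C * k, by positivity, fun F hF hFb => ?_⟩
    refine fatou ((reg_UC hF).box_iter isOpen_T m (fun n => reg_diff hF (eps_pos n).le) hF)
      (fun n => diff_box_iter isOpen_T m (reg_diff hF (eps_pos n).le)) fun n => ?_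
    have h1 := dir1 m hm (reg_nice hF (hardy_SB hFb) (eps_pos n) (eps_le n))
    rw [hkE] at h1
    have h2 : bergNormSqTube (2 * m) (Box^[m] (reg (1 / ((n:ℝ) + 1)) F)) ≤ ENNReal.ofReal k * hardyNormSq F :=
      h1.trans (by gcongr; exact reg_hardy F (eps_pos n))
    refine (H _ (diff_box_iter isOpen_T m (reg_diff hF (eps_pos n).le))
      (h2.trans_lt (ENNReal.mul_lt_top ENNReal.ofReal_lt_top hFb))).trans ?_
    rw [ENNReal.ofReal_mul hC.le, mul_assoc]
    gcongr

end BC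

/-- for `m ≥ 1` and a positive Borel measure `μ` on `T_{Λ₃}`,
`μ` is an `m`-box Carleson measure for `H²(T_{Λ₃})` iff `μ` is a Carleson measure
for the weighted Bergman space `A²_{2m}(T_{Λ₃})`. -/
theorem box_carleson_iff_bergman_carleson (m : ℕ) (hm : 1 ≤ m)
    (μ : Measure (Fin 3 → ℂ)) :
    (∃ A : ℝ, 0 < A ∧ ∀ F : (Fin 3 → ℂ) → ℂ,
        DifferentiableOn ℂ F TLambda3 → hardyNormSq F < ⊤ →
        (∫⁻ z in TLambda3, (‖Box^[m] F z‖₊ : ℝ≥0∞) ^ 2 ∂μ)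
          ≤ ENNReal.ofReal A * hardyNormSq F)
    ↔ (∃ C : ℝ, 0 < C ∧ ∀ G : (Fin 3 → ℂ) → ℂ,
        DifferentiableOn ℂ G TLambda3 → bergNormSqTube (2 * m) G < ⊤ →
        (∫⁻ z in TLambda3, (‖G z‖₊ : ℝ≥0∞) ^ 2 ∂μ)
          ≤ ENNReal.ofReal C * bergNormSqTube (2 * m) G) := by
  exact BC.main m hm μ
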